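/- arXiv:2009.05937 — 3 statements merged into one kernel-verified Lean document; each statement's English description precedes it below -/
import Mathlib

section
/- Let n = 2m with m ≥ 4, q = 2^m, and let f(x) = x^{3q} + a₁x^{2q+1} + a₂x^{q+2} + a₃x³ where a₁ ∈ F_{2^m} and a₂, a₃ ∈ F_{2^n}. Then f is APN over F_{2^n} if and only if: (1) m is even and (a₁,a₂,a₃) ∈ Γ₁ ∪ Γ₂, or (2) m is odd and (a₁,a₂,a₃) ∈ Γ₁. -/
/-- `f` is almost perfect nonlinear (APN): for every `a ≠ 0` and every `b`, the equation
`f (x + a) + f x = b` has at most two solutions `x`. -/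
def IsAPN {F : Type*} [Field F] (f : F → F) : Prop :=
  ∀ a : F, a ≠ 0 → ∀ b : F, {x : F | f (x + a) + f x = b}.ncard ≤ 2

/-- `L` is an affine permutation: it is bijective and `x ↦ L x - L 0` is additive
(over a field of characteristic 2, additive maps are exactly the `𝔽₂`-linear ones). -/
def IsAffinePerm {F : Type*} [Field F] (L : F → F) : Prop :=
  Function.Bijective L ∧ ∀ x y : F, L (x + y) + L 0 = L x + L y

/-- `f` and `g` are affine equivalent: `g = L₁ ∘ f ∘ L₂` for affine permutations `L₁, L₂`. -/
def AffEquiv {F : Type*} [Field F] (f g : F → F) : Prop :=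
  ∃ L₁ L₂ : F → F, IsAffinePerm L₁ ∧ IsAffinePerm L₂ ∧ ∀ x : F, g x = L₁ (f (L₂ x))

namespace Kim
section alg
variable {F : Type*} [Field F]

/-- the semi-bilinear map attached to a cubic -/
def UU (σ : F →+* F) (c0 c1 c2 c3 z a : F) : F :=
  c0*z^2*a + c1*z^2*σ a + c2*(σ z)^2*a + c3*(σ z)^2*σ a

/-- no nontrivial zeros -/
def NT (U : F → F → F) : Prop := ∀ a, a ≠ 0 → ∀ x, U x a + U a x = 0 → x = 0 ∨ x = a

variable [CharP F 2]

theorem powsum (g : Fˣ) (N : ℕ) (hN : Odd N) (hg : orderOf g = N) (k : ℤ) :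
    ∑ j ∈ Finset.range N, ((g : F)^j)^k = if (N:ℤ) ∣ k then 1 else 0 := by
  have e : ∀ j : ℕ, ((g : F)^j)^k = ((g^k : Fˣ) : F)^j := by
    intro j
    push_cast
    rw [← zpow_natCast, ← zpow_natCast, ← zpow_mul, ← zpow_mul, mul_comm]
  simp_rw [e]
  split_ifs with h
  · rw [← hg, orderOf_dvd_iff_zpow_eq_one] at h
    rw [h]
    simp
    obtain ⟨r, hr⟩ := hN
    rw [hr]; push_cast; rw [CharTwo.two_eq_zero]; ring
  · rw [← hg, orderOf_dvd_iff_zpow_eq_one] at h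
    have h1 : ((g^k : Fˣ) : F) ≠ 1 := by
      intro h2; apply h; exact Units.ext h2
    have := mul_geom_sum ((g^k : Fˣ) : F) N
    have h3 : ((g^k : Fˣ) : F)^N = 1 := by
      rw [← Units.val_pow_eq_pow_val, ← zpow_natCast, ← zpow_mul, mul_comm, zpow_mul, ← hg]
      simp [pow_orderOf_eq_one]
    rw [h3, sub_self] at this
    rcases mul_eq_zero.1 this with h4 | h4
    · exact absurd (sub_eq_zero.1 h4) h1
    · exact h4

theorem powsum0 (g : Fˣ) (N : ℕ) (hN : Odd N) (hg : orderOf g = N) (k : ℤ)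
    (h : k ≠ 0) (h2 : |k| < N) : ∑ j ∈ Finset.range N, ((g : F)^j)^k = 0 := by
  rw [powsum g N hN hg, if_neg]
  intro h3
  exact h (Int.eq_zero_of_abs_lt_dvd h3 h2)

theorem tlem (m : ℕ) (hm : 4 ≤ m) (N : ℕ) (hN : N = 2^m+1 ∨ N = 2^m-1) (g : Fˣ)
    (hg : orderOf g = N) (κ κ' τ h0 h1 h2 : F) (hh : h1 ≠ 0)
    (H : ∀ s : F, s ≠ 0 → s^N = 1 → (h0+h1*s+h2*s^2) *
      (∑ i ∈ Finset.range m, ((κ*s)^2^i+(κ'*s⁻¹)^2^i) + τ) = 0) : κ = 0 := by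
  obtain ⟨n, rfl⟩ : ∃ n, m = n+2 := ⟨m-2, by omega⟩
  obtain ⟨r, hr⟩ : ∃ r, 2^n = 4*r := ⟨2^(n-2), by
    have : n = (n-2)+2 := by omega
    rw [this, pow_add]; simp; ring⟩
  have hr1 : 1 ≤ r := by have : 0 < 2^n := by positivity
                         omega
  have hq : 2^(n+2) = 16*r := by rw [pow_add, hr]; ring
  have hNo : Odd N := by
    rcases hN with h | h
    · exact ⟨8*r, by omega⟩
    · exact ⟨8*r-1, by omega⟩
  set S : ℤ → F := fun k => ∑ j ∈ Finset.range N, ((g : F)^j)^k with hS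
  have S0 : ∀ k : ℤ, k ≠ 0 → |k| < N → S k = 0 := fun k h h' => powsum0 g N hNo hg k h h'
  have S1 : S 0 = 1 := by rw [hS]; simp only []; rw [powsum g N hNo hg]; simp
  have hsi : ∀ j : ℕ, ((g:F)^j) ≠ 0 := fun j => pow_ne_zero _ (Units.ne_zero g)
  have hsN : ∀ j : ℕ, ((g:F)^j)^N = 1 := by
    intro j
    rw [← pow_mul, mul_comm, pow_mul]
    have : (g:F)^N = 1 := by rw [← Units.val_pow_eq_pow_val, ← hg, pow_orderOf_eq_one]; rfl
    rw [this, one_pow]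
  set c : ℤ := 4*r+1 with hc
  have key : ∑ i ∈ Finset.range (n+2), (κ^2^i * (h0*S (2^i-c) + h1*S (2^i-c+1) + h2*S (2^i-c+2))
      + κ'^2^i * (h0*S (-2^i-c) + h1*S (-2^i-c+1) + h2*S (-2^i-c+2)))
      + τ * (h0*S (-c) + h1*S (-c+1) + h2*S (-c+2)) = 0 := by
    have e : ∀ s : F, s ≠ 0 → s^N = 1 →
      ∑ i ∈ Finset.range (n+2), (κ^2^i * (h0*s^((2:ℤ)^i-c) + h1*s^((2:ℤ)^i-c+1) + h2*s^((2:ℤ)^i-c+2))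
      + κ'^2^i * (h0*s^(-(2:ℤ)^i-c) + h1*s^(-(2:ℤ)^i-c+1) + h2*s^(-(2:ℤ)^i-c+2)))
      + τ * (h0*s^(-c) + h1*s^(-c+1) + h2*s^(-c+2)) = 0 := by
      intro s hs hsn
      have := congrArg (fun x => s^(-c) * x) (H s hs hsn)
      simp only [mul_zero] at this
      rw [← this, ← mul_assoc, mul_add (_ * _) _ τ, Finset.mul_sum]
      congr 1
      · apply Finset.sum_congr rfl
        intro i _
        have a1 : s^((2:ℤ)^i-c) = s^(2^i) * s^(-c) := by
          rw [sub_eq_add_neg, zpow_add₀ hs]; congr 1; rw [← zpow_natCast]; push_cast; rfl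
        have a2 : s^(-(2:ℤ)^i-c) = (s⁻¹)^(2^i) * s^(-c) := by
          rw [sub_eq_add_neg, zpow_add₀ hs]; congr 1
          rw [zpow_neg, inv_pow, ← zpow_natCast]; push_cast; rfl
        have a3 : ∀ k : ℤ, s^(k+2) = s^k*s^2 := by
          intro k; rw [zpow_add₀ hs]; norm_cast
        simp only [zpow_add_one₀ hs, a3, a1, a2, mul_pow]
        ring
      · have a3 : ∀ k : ℤ, s^(k+2) = s^k*s^2 := by
          intro k; rw [zpow_add₀ hs]; norm_cast
        simp only [zpow_add_one₀ hs, a3]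
        ring
    have e2 := Finset.sum_eq_zero (s := Finset.range N) (fun j _ => e ((g:F)^j) (hsi j) (hsN j))
    rw [Finset.sum_add_distrib, Finset.sum_comm] at e2
    rw [← e2]
    simp only [hS, Finset.mul_sum, Finset.sum_add_distrib, mul_add]
  have hcN : (N:ℤ) ≥ 16*r-1 := by omega
  have abs_of : ∀ k : ℤ, k < 16*r-1 → -(16*r-1:ℤ) < k → |k| < N := by
    intro k h h'; rw [abs_lt]; constructor <;> omega
  have two_facts : ∀ i, i ∈ Finset.range (n+2) → i ≠ n → (2:ℤ)^i ≤ 8*r ∧ 1 ≤ (2:ℤ)^i ∧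
      (2:ℤ)^i ≠ 4*r ∧ (2:ℤ)^i ≠ 4*r+1 ∧ (2:ℤ)^i ≠ 4*r-1 := by
    intro i hi hin
    have hi' := Finset.mem_range.1 hi
    have b1 : 2^i ≤ 2^(n+1) := Nat.pow_le_pow_right (by norm_num) (by omega)
    have b2 : 2^i ≠ 2^n := fun h => hin (Nat.pow_right_injective (le_refl 2) h)
    have b3 : 1 ≤ 2^i := Nat.one_le_two_pow
    have b4 : 2^i = 1 ∨ 2 ∣ 2^i := by
      rcases i with _ | i
      · left; rfl
      · right; exact ⟨2^i, by ring⟩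
    rw [pow_succ] at b1
    zify at b1 b2 b3 b4 hr
    omega
  have fin : ∑ i ∈ Finset.range (n+2), (κ^2^i * (h0*S (2^i-c) + h1*S (2^i-c+1) + h2*S (2^i-c+2))
      + κ'^2^i * (h0*S (-2^i-c) + h1*S (-2^i-c+1) + h2*S (-2^i-c+2))) = κ^2^n*h1 := by
    rw [Finset.sum_eq_single n]
    · have hrz : (2:ℤ)^n = 4*r := by exact_mod_cast hr
      rw [hrz]
      rw [show (4*(r:ℤ)-c+1) = 0 by rw [hc]; ring, S1]
      rw [S0 (4*r-c) (by omega) (abs_of _ (by omega) (by omega)),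
        S0 (4*r-c+2) (by omega) (abs_of _ (by omega) (by omega)),
        S0 (-(4*r)-c) (by omega) (abs_of _ (by omega) (by omega)),
        S0 (-(4*r)-c+1) (by omega) (abs_of _ (by omega) (by omega)),
        S0 (-(4*r)-c+2) (by omega) (abs_of _ (by omega) (by omega))]
      ring
    · intro i hi hin
      obtain ⟨f1, f2, f3, f4, f5⟩ := two_facts i hi hin
      generalize (2:ℤ)^i = w at *
      rw [S0 (w-c) (by omega) (abs_of _ (by omega) (by omega)),
        S0 (w-c+1) (by omega) (abs_of _ (by omega) (by omega)),
        S0 (w-c+2) (by omega) (abs_of _ (by omega) (by omega)),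
        S0 (-w-c) (by omega) (abs_of _ (by omega) (by omega)),
        S0 (-w-c+1) (by omega) (abs_of _ (by omega) (by omega)),
        S0 (-w-c+2) (by omega) (abs_of _ (by omega) (by omega))]
      ring
    · intro h; exact absurd (Finset.mem_range.2 (by omega)) h
  rw [fin, S0 (-c) (by omega) (abs_of _ (by omega) (by omega)),
        S0 (-c+1) (by omega) (abs_of _ (by omega) (by omega)),
        S0 (-c+2) (by omega) (abs_of _ (by omega) (by omega))] at key
  have : κ^2^n*h1 = 0 := by rw [← key]; ring
  rcases mul_eq_zero.1 this with h | h
  · exact pow_eq_zero_iff (by positivity) |>.1 h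
  · exact absurd h hh

theorem tlem2 (m : ℕ) (hm : 4 ≤ m) (N : ℕ) (hN : N = 2^m+1 ∨ N = 2^m-1) (g : Fˣ)
    (hg : orderOf g = N) (κ κ' τ h0 h1 h2 : F) (hh : h1 ≠ 0)
    (H : ∀ s : F, s ≠ 0 → s^N = 1 → (h0+h1*s+h2*s^2) *
      (∑ i ∈ Finset.range m, ((κ*s)^2^i+(κ'*s⁻¹)^2^i) + τ) = 0) : κ = 0 ∧ κ' = 0 ∧ τ = 0 := by
  have k1 := tlem m hm N hN g hg κ κ' τ h0 h1 h2 hh H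
  have k2 := tlem m hm N hN g hg κ' κ τ h2 h1 h0 hh (by
    intro s hs hsn
    have := H s⁻¹ (inv_ne_zero hs) (by rw [inv_pow, hsn, inv_one])
    rw [inv_inv] at this
    have e : (h2+h1*s+h0*s^2) = s^2*(h0+h1*s⁻¹+h2*s⁻¹^2) := by field_simp; ring
    rw [e, mul_assoc]
    simp only [add_comm ((κ' * _)^_)]
    rw [this, mul_zero])
  refine ⟨k1, k2, ?_⟩
  subst k1 k2
  have hq : 16 ≤ 2^m := by
    calc 16 = 2^4 := by norm_num
      _ ≤ 2^m := Nat.pow_le_pow_right (by norm_num) hm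
  have hNo : Odd N := by
    have : 2^m = 2*2^(m-1) := by rw [← pow_succ']; congr 1; omega
    rcases hN with h | h
    · exact ⟨2^(m-1), by omega⟩
    · exact ⟨2^(m-1)-1, by omega⟩
  have hsi : ∀ j : ℕ, ((g:F)^j) ≠ 0 := fun j => pow_ne_zero _ (Units.ne_zero g)
  have hsN : ∀ j : ℕ, ((g:F)^j)^N = 1 := by
    intro j
    rw [← pow_mul, mul_comm, pow_mul]
    have : (g:F)^N = 1 := by rw [← Units.val_pow_eq_pow_val, ← hg, pow_orderOf_eq_one]; rfl
    rw [this, one_pow]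
  have e : ∀ s : F, s ≠ 0 → s^N = 1 → τ*(h0*s^(-1:ℤ)+h1*s^(0:ℤ)+h2*s^(1:ℤ)) = 0 := by
    intro s hs hsn
    have := H s hs hsn
    simp at this
    simp
    rcases this with h | h
    · right
      have : h0 * s⁻¹ + h1 + h2 * s = s⁻¹*(h0+h1*s+h2*s^2) := by field_simp
      rw [this, h, mul_zero]
    · left; exact h
  have e2 := Finset.sum_eq_zero (s := Finset.range N) (fun j _ => e ((g:F)^j) (hsi j) (hsN j))
  rw [← Finset.mul_sum, Finset.sum_add_distrib, Finset.sum_add_distrib, ← Finset.mul_sum,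
    ← Finset.mul_sum, ← Finset.mul_sum, powsum0 g N hNo hg (-1) (by norm_num) (by simp; omega),
    powsum0 g N hNo hg 1 (by norm_num) (by simp; omega), powsum g N hNo hg 0] at e2
  simp [hh] at e2
  exact e2

theorem clem (m : ℕ) (hm : 4 ≤ m) (N : ℕ) (hN : N = 2^m-1) (g : Fˣ)
    (hg : orderOf g = N) (κ lam τ h0 h1 : F) (hh : h1 ≠ 0)
    (H : ∀ s : F, s ≠ 0 → s^N = 1 → (h0+h1*s) *
      (∑ i ∈ Finset.range m, ((κ*s^3)^2^i+(lam*s)^2^i) + τ) = 0) : κ = 0 := by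
  obtain ⟨n, rfl⟩ : ∃ n, m = n+2 := ⟨m-2, by omega⟩
  obtain ⟨r, hr⟩ : ∃ r, 2^n = 4*r := ⟨2^(n-2), by
    have : n = (n-2)+2 := by omega
    rw [this, pow_add]; simp; ring⟩
  have hr1 : 1 ≤ r := by have : 0 < 2^n := by positivity
                         omega
  have hq : 2^(n+2) = 16*r := by rw [pow_add, hr]; ring
  have hNo : Odd N := ⟨8*r-1, by omega⟩
  set S : ℤ → F := fun k => ∑ j ∈ Finset.range N, ((g : F)^j)^k with hS
  have S0 : ∀ k : ℤ, k ≠ 0 → |k| < N → S k = 0 := fun k h h' => powsum0 g N hNo hg k h h'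
  have S1 : S 0 = 1 := by rw [hS]; simp only []; rw [powsum g N hNo hg]; simp
  have hsi : ∀ j : ℕ, ((g:F)^j) ≠ 0 := fun j => pow_ne_zero _ (Units.ne_zero g)
  have hsN : ∀ j : ℕ, ((g:F)^j)^N = 1 := by
    intro j
    rw [← pow_mul, mul_comm, pow_mul]
    have : (g:F)^N = 1 := by rw [← Units.val_pow_eq_pow_val, ← hg, pow_orderOf_eq_one]; rfl
    rw [this, one_pow]
  set c : ℤ := 12*r+1 with hc
  have key : ∑ i ∈ Finset.range (n+2), (κ^2^i * (h0*S (3*2^i-c) + h1*S (3*2^i-c+1))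
      + lam^2^i * (h0*S (2^i-c) + h1*S (2^i-c+1)))
      + τ * (h0*S (-c) + h1*S (-c+1)) = 0 := by
    have e : ∀ s : F, s ≠ 0 → s^N = 1 →
      ∑ i ∈ Finset.range (n+2), (κ^2^i * (h0*s^(3*(2:ℤ)^i-c) + h1*s^(3*(2:ℤ)^i-c+1))
      + lam^2^i * (h0*s^((2:ℤ)^i-c) + h1*s^((2:ℤ)^i-c+1)))
      + τ * (h0*s^(-c) + h1*s^(-c+1)) = 0 := by
      intro s hs hsn
      have := congrArg (fun x => s^(-c) * x) (H s hs hsn)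
      simp only [mul_zero] at this
      rw [← this, ← mul_assoc, mul_add (_ * _) _ τ, Finset.mul_sum]
      congr 1
      · apply Finset.sum_congr rfl
        intro i _
        have a1 : s^((2:ℤ)^i-c) = s^(2^i) * s^(-c) := by
          rw [sub_eq_add_neg, zpow_add₀ hs]; congr 1; rw [← zpow_natCast]; push_cast; rfl
        have a2 : s^(3*(2:ℤ)^i-c) = (s^3)^(2^i) * s^(-c) := by
          rw [sub_eq_add_neg, zpow_add₀ hs]; congr 1
          rw [← pow_mul, ← zpow_natCast]; push_cast; rfl
        simp only [zpow_add_one₀ hs, a1, a2, mul_pow]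
        ring
      · simp only [zpow_add_one₀ hs]
        ring
    have e2 := Finset.sum_eq_zero (s := Finset.range N) (fun j _ => e ((g:F)^j) (hsi j) (hsN j))
    rw [Finset.sum_add_distrib, Finset.sum_comm] at e2
    rw [← e2]
    simp only [hS, Finset.mul_sum, Finset.sum_add_distrib, mul_add]
  have hcN : (N:ℤ) = 16*r-1 := by omega
  have abs_of : ∀ k : ℤ, k < 16*r-1 → -(16*r-1:ℤ) < k → |k| < N := by
    intro k h h'; rw [abs_lt]; constructor <;> omega
  have two_facts : ∀ i, i ∈ Finset.range (n+2) → i ≠ n → (2:ℤ)^i ≤ 8*r ∧ 1 ≤ (2:ℤ)^i ∧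
      (2:ℤ)^i ≠ 4*r := by
    intro i hi hin
    have hi' := Finset.mem_range.1 hi
    have b1 : 2^i ≤ 2^(n+1) := Nat.pow_le_pow_right (by norm_num) (by omega)
    have b2 : 2^i ≠ 2^n := fun h => hin (Nat.pow_right_injective (le_refl 2) h)
    have b3 : 1 ≤ 2^i := Nat.one_le_two_pow
    rw [pow_succ] at b1
    zify at b1 b2 b3 hr
    omega
  have fin : ∑ i ∈ Finset.range (n+2), (κ^2^i * (h0*S (3*2^i-c) + h1*S (3*2^i-c+1))
      + lam^2^i * (h0*S (2^i-c) + h1*S (2^i-c+1))) = κ^2^n*h1 := by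
    rw [Finset.sum_eq_single n]
    · have hrz : (2:ℤ)^n = 4*r := by exact_mod_cast hr
      rw [hrz]
      rw [show (3*(4*(r:ℤ))-c+1) = 0 by rw [hc]; ring, S1]
      rw [S0 (3*(4*r)-c) (by omega) (abs_of _ (by omega) (by omega)),
        S0 (4*r-c) (by omega) (abs_of _ (by omega) (by omega)),
        S0 (4*r-c+1) (by omega) (abs_of _ (by omega) (by omega))]
      ring
    · intro i hi hin
      obtain ⟨f1, f2, f3⟩ := two_facts i hi hin
      generalize (2:ℤ)^i = w at *
      rw [S0 (3*w-c) (by omega) (abs_of _ (by omega) (by omega)),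
        S0 (3*w-c+1) (by omega) (abs_of _ (by omega) (by omega)),
        S0 (w-c) (by omega) (abs_of _ (by omega) (by omega)),
        S0 (w-c+1) (by omega) (abs_of _ (by omega) (by omega))]
      ring
    · intro h; exact absurd (Finset.mem_range.2 (by omega)) h
  rw [fin, S0 (-c) (by omega) (abs_of _ (by omega) (by omega)),
        S0 (-c+1) (by omega) (abs_of _ (by omega) (by omega))] at key
  have : κ^2^n*h1 = 0 := by rw [← key]; ring
  rcases mul_eq_zero.1 this with h | h
  · exact pow_eq_zero_iff (by positivity) |>.1 h
  · exact absurd h hh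
end alg
end Kim

namespace Kim
section ff
variable {F : Type*} [Field F] [CharP F 2]

/-- trace -/
def tr (m : ℕ) (r : F) : F := ∑ i ∈ Finset.range m, r^2^i

theorem tr_add (m : ℕ) (r s : F) : tr m (r+s) = tr m r + tr m s := by
  unfold tr
  rw [← Finset.sum_add_distrib]
  exact Finset.sum_congr rfl fun i _ => add_pow_char_pow r s 2 i

theorem tr_zero (m : ℕ) : tr m (0:F) = 0 := by simp [tr]

theorem tr_sq_add (m : ℕ) (r : F) : tr m (r^2+r) = r^2^m + r := by
  unfold tr
  induction m with
  | zero => simp; exact (CharTwo.add_self_eq_zero r).symm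
  | succ k ih =>
    rw [Finset.sum_range_succ, ih, add_pow_char_pow, ← pow_mul, ← pow_succ']
    grind

theorem tr_pow (m : ℕ) (r : F) : tr m (r^2) = (tr m r)^2 := by
  unfold tr
  rw [CharTwo.sum_sq]
  exact Finset.sum_congr rfl fun i _ => by rw [← pow_mul, ← pow_mul, mul_comm]


theorem tr_sq (σ : F →+* F) (m : ℕ) (hσ : ∀ x, σ x = x^2^m) (r : F) (hr : σ r = r) : tr m (r^2) = tr m r := by
  have h1 := tr_sq_add m r
  rw [tr_add, ← hσ, hr] at h1
  grind

theorem tr_01 (σ : F →+* F) (m : ℕ) (hσ : ∀ x, σ x = x^2^m) (r : F) (hr : σ r = r) : tr m r = 0 ∨ tr m r = 1 := by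
  have h1 := tr_sq σ m hσ r hr
  rw [tr_pow] at h1
  grind

theorem sig_sig (σ : F →+* F) (m : ℕ) (hσ : ∀ x, σ x = x^2^m) [Fintype F] (hcard : Fintype.card F = 2^(2*m)) (x : F) : σ (σ x) = x := by
  rw [hσ, hσ, ← pow_mul, ← pow_add, ← two_mul, ← hcard, FiniteField.pow_card]

theorem as_exists (σ : F →+* F) (m : ℕ) (hσ : ∀ x, σ x = x^2^m) [Fintype F] (hm : 1 ≤ m) (hcard : Fintype.card F = 2^(2*m)) (r : F) (hr : σ r = r) :
    ∃ y, y^2+y = r ∧ σ y = y + tr m r := by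
  classical
  suffices h : ∃ y, y^2+y = r by
    obtain ⟨y, hy⟩ := h
    refine ⟨y, hy, ?_⟩
    rw [← hy, tr_sq_add, hσ]; grind
  by_contra hno
  push Not at hno
  let I : Finset F := Finset.univ.image (fun y : F => y^2+y)
  have hI : 2^(2*m) ≤ 2 * I.card := by
    rw [← hcard, ← Finset.card_univ]
    apply Finset.card_le_mul_card_image
    intro b _
    by_cases hb : ∃ y, y^2+y = b
    · obtain ⟨y, hy⟩ := hb
      calc _ ≤ ({y, y+1} : Finset F).card := by
            apply Finset.card_le_card
            intro x hx
            simp at hx ⊢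
            have : (x+y)*(x+(y+1)) = 0 := by grind
            rcases mul_eq_zero.1 this with h | h
            · left; exact CharTwo.add_eq_zero.1 h
            · right; exact CharTwo.add_eq_zero.1 h
        _ ≤ 2 := Finset.card_le_two
    · push Not at hb
      rw [Finset.filter_false_of_mem]
      · simp
      · intro x _; exact hb x
  have hrI : r ∉ I := by
    intro h
    obtain ⟨y, _, hy⟩ := Finset.mem_image.1 h
    exact hno y hy
  have hz : ∀ x ∈ insert r I, tr (2*m) x = 0 := by
    intro x hx
    rcases Finset.mem_insert.1 hx with h | h
    · subst h
      unfold tr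
      rw [two_mul, Finset.sum_range_add]
      have : ∀ i, x^2^(m+i) = x^2^i := by
        intro i
        rw [pow_add, pow_mul, ← hσ, hr]
      simp only [this]
      exact CharTwo.add_self_eq_zero _
    · obtain ⟨y, _, hy⟩ := Finset.mem_image.1 h
      rw [← hy, tr_sq_add, ← hcard, FiniteField.pow_card]
      exact CharTwo.add_self_eq_zero _
  let P : Polynomial F := ∑ i ∈ Finset.range (2*m), Polynomial.X^2^i
  have hP : P = 0 := by
    apply Polynomial.eq_zero_of_natDegree_lt_card_of_eval_eq_zero' P (insert r I)
    · intro x hx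
      rw [← hz x hx]
      simp [P, tr, Polynomial.eval_finsetSum]
    · rw [Finset.card_insert_of_notMem hrI]
      have h1 : P.natDegree ≤ 2^(2*m-1) := by
        apply Polynomial.natDegree_sum_le_of_forall_le
        intro i hi
        rw [Polynomial.natDegree_X_pow]
        exact Nat.pow_le_pow_right (by norm_num) (by have := Finset.mem_range.1 hi; omega)
      have h2 : 2^(2*m) = 2*2^(2*m-1) := by rw [← pow_succ']; congr 1; omega
      omega
  have hc : P.coeff 1 = 1 := by
    simp only [P, Polynomial.finsetSum_coeff, Polynomial.coeff_X_pow]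
    rw [Finset.sum_eq_single 0]
    · simp
    · intro i _ hi
      rw [if_neg]
      intro h
      have := Nat.one_lt_two_pow hi
      omega
    · intro h; exfalso; apply h; simp; omega
  rw [hP] at hc
  simp at hc

theorem sqrt_ex [Fintype F] (x : F) : ∃ y, y^2 = x := by
  have h : ringChar F = 2 := by
    exact ringChar.eq_iff.2 inferInstance
  obtain ⟨y, hy⟩ := FiniteField.isSquare_of_char_two h x
  exact ⟨y, by rw [hy]; ring⟩

theorem ord_ex (m : ℕ) [Fintype F] (hcard : Fintype.card F = 2^(2*m)) (N : ℕ) (hN : N = 2^m+1 ∨ N = 2^m-1)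
    (hm : 1 ≤ m) : ∃ g : Fˣ, orderOf g = N := by
  classical
  obtain ⟨g, hg⟩ := IsCyclic.exists_ofOrder_eq_natCard (α := Fˣ)
  have hc : Nat.card Fˣ = (2^m+1)*(2^m-1) := by
    rw [Nat.card_units, Nat.card_eq_fintype_card, hcard, mul_comm 2 m, pow_mul]
    have := Nat.sq_sub_sq (2^m) 1
    simpa using this
  have h2 : 2 ≤ 2^m := by
    calc 2 = 2^1 := rfl
      _ ≤ 2^m := Nat.pow_le_pow_right (by norm_num) hm
  rcases hN with h | h
  · refine ⟨g^(2^m-1), ?_⟩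
    rw [orderOf_pow' _ (by omega), hg, hc, Nat.gcd_mul_left_left, h, Nat.mul_div_cancel _ (by omega)]
  · refine ⟨g^(2^m+1), ?_⟩
    rw [orderOf_pow' _ (by omega), hg, hc, Nat.gcd_mul_right_left, h, Nat.mul_div_cancel_left _ (by omega)]

theorem hilb (σ : F →+* F) (w : F) (hw : w * σ w = 1) : ∃ z, z ≠ 0 ∧ z = w * σ z := by
  by_cases h : w = 1
  · exact ⟨1, one_ne_zero, by simp [h]⟩
  · refine ⟨1+w, ?_, ?_⟩
    · intro h1; apply h; grind
    · simp [mul_add, hw]; ring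
end ff
end Kim

namespace Kim
section cr
variable {F : Type*} [Field F] [CharP F 2]

theorem core (σ : F →+* F) (U : F → F → F) (hNT : NT U)
    (hl : ∀ t z a, σ t = t → U (t*z) a = t^2 * U z a) (hr : ∀ t z a, σ t = t → U a (t*z) = t * U a z)
    (a z : F) (h : a * σ z + σ a * z ≠ 0) (h1 : U z a ≠ 0) (h2 : U a z ≠ 0)
    (h3 : U z a * σ (U a z) + σ (U z a) * U a z = 0) : False := by
  have ha : a ≠ 0 := by rintro rfl; simp at h
  have hz : z ≠ 0 := by rintro rfl; simp at h
  have h1' : σ (U z a) ≠ 0 := by simpa using h1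
  obtain ⟨t, ht⟩ : ∃ t, t = U a z / U z a := ⟨_, rfl⟩
  have ht1 : t * U z a = U a z := by rw [ht]; field_simp
  have hs : σ t = t := by
    rw [ht, map_div₀]
    rw [div_eq_div_iff h1' h1]
    grind
  have ht0 : t ≠ 0 := by rw [ht]; exact div_ne_zero h2 h1
  have := hNT a ha (t*z) (by rw [hl t z a hs, hr t z a hs, ← ht1]; grind)
  rcases this with h | h
  · exact (mul_ne_zero ht0 hz) h
  · apply_fun (fun x => x * σ z + σ x * z) at h
    simp only [map_mul, hs] at h
    grind

theorem crit (σ : F →+* F) (U : F → F → F) (hNT : NT U)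
    (hl : ∀ t z a, σ t = t → U (t*z) a = t^2 * U z a) (hr : ∀ t z a, σ t = t → U a (t*z) = t * U a z)
    (a z c0 c1 c2 c3 d0 d1 d2 d3 X Y Z T k p01 p02 p03 p12 p13 p23 : F)
    (e01 : p01 = c0*d1+c1*d0) (e02 : p02 = c0*d2+c2*d0) (e03 : p03 = c0*d3+c3*d0)
    (e12 : p12 = c1*d2+c2*d1) (e13 : p13 = c1*d3+c3*d1) (e23 : p23 = c2*d3+c3*d2)
    (h1 : U z a = c0*Z^2*X+c1*Z^2*Y+c2*T^2*X+c3*T^2*Y)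
    (h2 : σ (U z a) = d0*Z^2*X+d1*Z^2*Y+d2*T^2*X+d3*T^2*Y)
    (h3 : U a z = c0*X^2*Z+c1*X^2*T+c2*Y^2*Z+c3*Y^2*T)
    (h4 : σ (U a z) = d0*X^2*Z+d1*X^2*T+d2*Y^2*Z+d3*Y^2*T)
    (hk : a * σ z + σ a * z = k*(X*T+Y*Z)) (hk0 : k ≠ 0) (hZ : Z ≠ 0 ∨ T ≠ 0)
    (hβ : p02*X^2+(p03+p12)*X*Y+p13*Y^2 ≠ 0)
    (hG : p01*X^4+(p03+p12)*X^2*Y^2+p23*Y^4 ≠ 0)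
    (hG0 : Z^2*(p01*X^2+p02*X*Y+p12*Y^2) + Z*T*(p02*X^2+(p03+p12)*X*Y+p13*Y^2)
      + T^2*(p12*X^2+p13*X*Y+p23*Y^2) = 0) : False := by
  have fin : ∀ s, s ≠ 0 → Z^2 * s = 0 → T^2 * s = 0 → False := by
    intro s hs h h'
    rcases hZ with hz | hz
    · simp_all
    · simp_all
  have hD : X*T+Y*Z ≠ 0 := by
    intro hD
    clear e01 e02 e03 e12 e13 e23 h1 h2 h3 h4 hk
    refine fin _ hG ?_ ?_
    · have : Z^2*(p01*X^4+(p03+p12)*X^2*Y^2+p23*Y^4) = X^2*(Z^2*(p01*X^2+p02*X*Y+p12*Y^2) + Z*T*(p02*X^2+(p03+p12)*X*Y+p13*Y^2)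
        + T^2*(p12*X^2+p13*X*Y+p23*Y^2)) + (X*T+Y*Z)*(Z*X*(p02*X^2+(p03+p12)*X*Y+p13*Y^2)
        + (X*T+Y*Z)*(p12*X^2+p13*X*Y+p23*Y^2)) := by
        clear fin hG hG0 hD hβ; grind
      rw [this, hG0, hD]; ring
    · have : T^2*(p01*X^4+(p03+p12)*X^2*Y^2+p23*Y^4) = Y^2*(Z^2*(p01*X^2+p02*X*Y+p12*Y^2) + Z*T*(p02*X^2+(p03+p12)*X*Y+p13*Y^2)
        + T^2*(p12*X^2+p13*X*Y+p23*Y^2)) + (X*T+Y*Z)*(T*Y*(p02*X^2+(p03+p12)*X*Y+p13*Y^2)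
        + (X*T+Y*Z)*(p01*X^2+p02*X*Y+p12*Y^2)) := by
        clear fin hG hG0 hD hβ; grind
      rw [this, hG0, hD]; ring
  refine core σ U hNT hl hr a z ?_ ?_ ?_ ?_
  · rw [hk]; exact mul_ne_zero hk0 hD
  · intro h
    rw [h, map_zero] at h2
    rw [h] at h1
    subst e01 e02 e03 e12 e13 e23
    clear hG hG0 h3 h4 hk
    refine fin _ hβ ?_ ?_
    · calc _ = (d2*X+d3*Y)*(c0*Z^2*X+c1*Z^2*Y+c2*T^2*X+c3*T^2*Y)+(c2*X+c3*Y)*(d0*Z^2*X+d1*Z^2*Y+d2*T^2*X+d3*T^2*Y) := by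
            clear h1 h2 hβ fin; grind
        _ = 0 := by rw [← h1, ← h2]; ring
    · calc _ = (d0*X+d1*Y)*(c0*Z^2*X+c1*Z^2*Y+c2*T^2*X+c3*T^2*Y)+(c0*X+c1*Y)*(d0*Z^2*X+d1*Z^2*Y+d2*T^2*X+d3*T^2*Y) := by
            clear h1 h2 hβ fin; grind
        _ = 0 := by rw [← h1, ← h2]; ring
  · intro h
    rw [h, map_zero] at h4
    rw [h] at h3
    subst e01 e02 e03 e12 e13 e23
    clear hβ hG0 h1 h2 hk
    rcases hZ with hz | hz
    · apply mul_ne_zero hz hG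
      calc _ = (d1*X^2+d3*Y^2)*(c0*X^2*Z+c1*X^2*T+c2*Y^2*Z+c3*Y^2*T)+(c1*X^2+c3*Y^2)*(d0*X^2*Z+d1*X^2*T+d2*Y^2*Z+d3*Y^2*T) := by
            clear h3 h4 hG fin; grind
        _ = 0 := by rw [← h3, ← h4]; ring
    · apply mul_ne_zero hz hG
      calc _ = (d0*X^2+d2*Y^2)*(c0*X^2*Z+c1*X^2*T+c2*Y^2*Z+c3*Y^2*T)+(c0*X^2+c2*Y^2)*(d0*X^2*Z+d1*X^2*T+d2*Y^2*Z+d3*Y^2*T) := by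
            clear h3 h4 hG fin; grind
        _ = 0 := by rw [← h3, ← h4]; ring
  · rw [h2, h4, h1, h3]
    calc _ = (X*T+Y*Z)*(Z^2*(p01*X^2+p02*X*Y+p12*Y^2) + Z*T*(p02*X^2+(p03+p12)*X*Y+p13*Y^2)
        + T^2*(p12*X^2+p13*X*Y+p23*Y^2)) := by
          subst e01 e02 e03 e12 e13 e23
          clear hβ hG hG0 hD hk fin h1 h2 h3 h4
          grind
      _ = 0 := by rw [hG0, mul_zero]
end cr
end Kim

namespace Kim
section la
variable {F : Type*} [Field F] [CharP F 2]

theorem UU_hl (σ : F →+* F) (c0 c1 c2 c3 t z a : F) (ht : σ t = t) :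
    UU σ c0 c1 c2 c3 (t*z) a = t^2 * UU σ c0 c1 c2 c3 z a := by
  simp only [UU, map_mul, ht]; ring

theorem UU_hr (σ : F →+* F) (c0 c1 c2 c3 t z a : F) (ht : σ t = t) :
    UU σ c0 c1 c2 c3 a (t*z) = t * UU σ c0 c1 c2 c3 a z := by
  simp only [UU, map_mul, ht]; ring

theorem zero (σ : F →+* F) (c0 c1 c2 c3 : F) (hNT : NT (UU σ c0 c1 c2 c3)) (t : F) (ht : σ t = t)
    (ht0 : t ≠ 0) (ht1 : t ≠ 1) (a : F) (ha : a ≠ 0) : UU σ c0 c1 c2 c3 a a ≠ 0 := by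
  intro h
  rcases hNT a ha (t*a) (by rw [UU_hl _ _ _ _ _ _ _ _ ht, UU_hr _ _ _ _ _ _ _ _ ht, h]; ring) with h | h
  · exact mul_ne_zero ht0 ha h
  · apply ht1; apply mul_right_cancel₀ ha; rw [h, one_mul]

theorem critC (σ : F →+* F) (hσ2 : ∀ x, σ (σ x) = x) (c0 c1 c2 c3 : F) (hNT : NT (UU σ c0 c1 c2 c3))
    (p01 p02 p03 p12 p13 p23 : F)
    (e01 : p01 = c0*σ c2+c1*σ c3) (e02 : p02 = c0*σ c1+c2*σ c3) (e03 : p03 = c0*σ c0+c3*σ c3)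
    (e12 : p12 = c1*σ c1+c2*σ c2) (e13 : p13 = c1*σ c0+c3*σ c2) (e23 : p23 = c2*σ c0+c3*σ c1)
    (a z : F) (hz : z ≠ 0)
    (hβ : p02*a^2+(p03+p12)*a*σ a+p13*(σ a)^2 ≠ 0)
    (hG : p01*a^4+(p03+p12)*a^2*(σ a)^2+p23*(σ a)^4 ≠ 0)
    (hG0 : z^2*(p01*a^2+p02*a*σ a+p12*(σ a)^2) + z*σ z*(p02*a^2+(p03+p12)*a*σ a+p13*(σ a)^2)
      + (σ z)^2*(p12*a^2+p13*a*σ a+p23*(σ a)^2) = 0) : False := by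
  refine crit σ _ hNT (UU_hl σ c0 c1 c2 c3) (UU_hr σ c0 c1 c2 c3) a z c0 c1 c2 c3 (σ c3) (σ c2) (σ c1) (σ c0)
    a (σ a) z (σ z) 1 p01 p02 p03 p12 p13 p23 e01 e02 e03 e12 e13 e23 rfl ?_ rfl ?_ ?_ one_ne_zero
    (Or.inl hz) hβ hG hG0
  · simp only [UU, map_add, map_mul, map_pow, hσ2]; ring
  · simp only [UU, map_add, map_mul, map_pow, hσ2]; ring
  · ring

theorem critR (σ : F →+* F) (hσ2 : ∀ x, σ (σ x) = x) (c0 c1 c2 c3 : F) (hNT : NT (UU σ c0 c1 c2 c3))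
    (e1 e2 : F) (he : e1 * σ e2 + σ e1 * e2 ≠ 0) (C0 C1 C2 C3 : F)
    (E0 : C0 = UU σ c0 c1 c2 c3 e1 e1) (E1 : C1 = UU σ c0 c1 c2 c3 e1 e2)
    (E2 : C2 = UU σ c0 c1 c2 c3 e2 e1) (E3 : C3 = UU σ c0 c1 c2 c3 e2 e2)
    (p01 p02 p03 p12 p13 p23 : F)
    (e01 : p01 = C0*σ C1+C1*σ C0) (e02 : p02 = C0*σ C2+C2*σ C0) (e03 : p03 = C0*σ C3+C3*σ C0)
    (e12 : p12 = C1*σ C2+C2*σ C1) (e13 : p13 = C1*σ C3+C3*σ C1) (e23 : p23 = C2*σ C3+C3*σ C2)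
    (X Y Z T : F) (hX : σ X = X) (hY : σ Y = Y) (hZ : σ Z = Z) (hT : σ T = T)
    (hz : Z ≠ 0 ∨ T ≠ 0)
    (hβ : p02*X^2+(p03+p12)*X*Y+p13*Y^2 ≠ 0)
    (hG : p01*X^4+(p03+p12)*X^2*Y^2+p23*Y^4 ≠ 0)
    (hG0 : Z^2*(p01*X^2+p02*X*Y+p12*Y^2) + Z*T*(p02*X^2+(p03+p12)*X*Y+p13*Y^2)
      + T^2*(p12*X^2+p13*X*Y+p23*Y^2) = 0) : False := by
  have key : ∀ X Y Z T : F, σ X = X → σ Y = Y → σ Z = Z → σ T = T →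
      UU σ c0 c1 c2 c3 (Z*e1+T*e2) (X*e1+Y*e2) = C0*Z^2*X+C1*Z^2*Y+C2*T^2*X+C3*T^2*Y := by
    intro X Y Z T hX hY hZ hT
    subst E0 E1 E2 E3
    simp only [UU, map_add, map_mul, hX, hY, hZ, hT, CharTwo.add_sq]
    ring
  have key2 : ∀ X Y Z T : F, σ X = X → σ Y = Y → σ Z = Z → σ T = T →
      σ (UU σ c0 c1 c2 c3 (Z*e1+T*e2) (X*e1+Y*e2)) = σ C0*Z^2*X+σ C1*Z^2*Y+σ C2*T^2*X+σ C3*T^2*Y := by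
    intro X Y Z T hX hY hZ hT
    rw [key X Y Z T hX hY hZ hT]
    simp only [map_add, map_mul, map_pow, hX, hY, hZ, hT]
  refine crit σ _ hNT (UU_hl σ c0 c1 c2 c3) (UU_hr σ c0 c1 c2 c3) (X*e1+Y*e2) (Z*e1+T*e2) C0 C1 C2 C3
    (σ C0) (σ C1) (σ C2) (σ C3)
    X Y Z T (e1 * σ e2 + σ e1 * e2) p01 p02 p03 p12 p13 p23 e01 e02 e03 e12 e13 e23
    (key X Y Z T hX hY hZ hT) (key2 X Y Z T hX hY hZ hT)
    (key Z T X Y hZ hT hX hY) (key2 Z T X Y hZ hT hX hY) ?_ he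
    hz hβ hG hG0
  simp only [map_add, map_mul, hX, hY, hZ, hT]
  clear hβ hG hG0 e01 e02 e03 e12 e13 e23 he E0 E1 E2 E3 key key2 hNT
  grind

theorem lemA [Fintype F] (σ : F →+* F) (m : ℕ) (hm : 4 ≤ m) (hσ : ∀ x, σ x = x^2^m)
    (hcard : Fintype.card F = 2^(2*m)) (c0 c1 c2 c3 : F) (hNT : NT (UU σ c0 c1 c2 c3))
    (p01 p02 p03 p12 p13 p23 : F)
    (e01 : p01 = c0*σ c2+c1*σ c3) (e02 : p02 = c0*σ c1+c2*σ c3) (e03 : p03 = c0*σ c0+c3*σ c3)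
    (e12 : p12 = c1*σ c1+c2*σ c2) (e13 : p13 = c1*σ c0+c3*σ c2) (e23 : p23 = c2*σ c0+c3*σ c1)
    (h02 : p02 = 0) (hθ : p03 + p12 ≠ 0) : p23 = 0 ∧ (p12 = 0 ∨ (p03 = 0 ∧ Even m)) := by
  have hσ2 := sig_sig σ m hσ hcard
  have s01 : σ p01 = p23 := by rw [e01, e23]; simp only [map_add, map_mul, hσ2]; ring
  have s23 : σ p23 = p01 := by rw [← s01, hσ2]
  have s02 : σ p02 = p13 := by rw [e02, e13]; simp only [map_add, map_mul, hσ2]; ring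
  have s03 : σ p03 = p03 := by rw [e03]; simp only [map_add, map_mul, hσ2]; ring
  have s12 : σ p12 = p12 := by rw [e12]; simp only [map_add, map_mul, hσ2]; ring
  have h13 : p13 = 0 := by rw [← s02, h02, map_zero]
  have Pl : p01*p23 + p03*p12 = 0 := by
    have : p01*p23+p02*p13+p03*p12 = 0 := by
      rw [e01, e02, e03, e12, e13, e23]
      clear * - 
      grind
    rw [h02] at this; simpa using this
  have crit := critC σ hσ2 c0 c1 c2 c3 hNT p01 p02 p03 p12 p13 p23 e01 e02 e03 e12 e13 e23
  clear e01 e02 e03 e12 e13 e23 hNT s02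
  subst h02 h13
  obtain ⟨θ, hθe⟩ : ∃ θ, θ = p03 + p12 := ⟨_, rfl⟩
  rw [← hθe] at crit hθ
  have sθ : σ θ = θ := by rw [hθe, map_add, s03, s12]
  obtain ⟨κ, hκ⟩ := sqrt_ex (p01*p12/θ^2)
  obtain ⟨h0, hh0⟩ := sqrt_ex p23
  obtain ⟨h1, hh1⟩ := sqrt_ex θ
  obtain ⟨h2, hh2⟩ := sqrt_ex p01
  have hκ' : (σ κ)^2 = p23*p12/θ^2 := by
    rw [← map_pow, hκ, map_div₀, map_mul, map_pow, s01, s12, sθ]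
  have h1ne : h1 ≠ 0 := by rintro rfl; apply hθ; rw [← hh1]; ring
  obtain ⟨g, hg⟩ := ord_ex m hcard (2^m+1) (Or.inl rfl) (by omega)
  have fin := tlem2 m hm (2^m+1) (Or.inl rfl) g hg κ (σ κ) (tr m (p12/θ)) h0 h1 h2 h1ne (by
    intro s hs hsN
    have hss : s * σ s = 1 := by rw [hσ, ← hsN]; ring
    have hsi : σ s = s⁻¹ := eq_inv_of_mul_eq_one_right hss
    by_contra hcon
    rw [mul_eq_zero, not_or] at hcon
    obtain ⟨hc1, hc2⟩ := hcon
    obtain ⟨u, hu⟩ : ∃ u, u = κ*s + σ κ * s⁻¹ := ⟨_, rfl⟩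
    have su : σ u = u := by rw [hu, map_add, map_mul, map_mul, map_inv₀, hσ2, hsi, inv_inv]; ring
    obtain ⟨r, hr⟩ : ∃ r, r = u^2 + p12/θ := ⟨_, rfl⟩
    have sr : σ r = r := by rw [hr, map_add, map_pow, map_div₀, su, s12, sθ]
    have htr : tr m r = 1 := by
      refine (tr_01 σ m hσ r sr).resolve_left ?_
      intro h
      apply hc2
      rw [Finset.sum_add_distrib]
      change tr m (κ*s) + tr m (σ κ * s⁻¹) + _ = 0
      rw [← tr_add, ← hu, ← tr_sq σ m hσ u su, ← tr_add, ← hr, h]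
    obtain ⟨y, hy, hy1⟩ := as_exists σ m hσ (by omega) hcard r sr
    rw [htr] at hy1
    obtain ⟨a, ha, hab⟩ := hilb σ s hss
    obtain ⟨b, hb⟩ : ∃ b, b = σ a := ⟨_, rfl⟩
    have sb : σ b = a := by rw [hb, hσ2]
    rw [← hb] at hab
    have hb0 : b ≠ 0 := by rintro rfl; apply ha; rw [hab]; ring
    obtain ⟨α, hα⟩ : ∃ α, α = p01*a^2+p12*b^2 := ⟨_, rfl⟩
    obtain ⟨γ, hγ⟩ : ∃ γ, γ = p12*a^2+p23*b^2 := ⟨_, rfl⟩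
    have sα : σ α = γ := by
      rw [hα, hγ]; simp only [map_add, map_mul, map_pow, sb, ← hb, s01, s12]; ring
    have hag : α*γ = (θ*a*b)^2*r := by
      have e1 : θ^2*s^2*r = p01*p12*s^4+p12*p23+p12*θ*s^2 := by
        rw [hr, hu, CharTwo.add_sq, mul_pow, mul_pow, hκ, hκ']
        field_simp
      have e2 : (θ*a*b)^2*r = b^4*(p01*p12*s^4+p12*p23+p12*θ*s^2) := by
        rw [← e1, hab]; ring
      rw [e2, hα, hγ, hab, hθe]
      linear_combination b^4*s^2*Pl - b^4*s^2*p03*p12*(CharTwo.two_eq_zero (R := F))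
    have hβ : θ*a*b ≠ 0 := mul_ne_zero (mul_ne_zero hθ ha) hb0
    have hr0 : r ≠ 0 := by
      rintro h0
      rw [h0, tr_zero] at htr
      exact zero_ne_one htr
    have hα0 : α ≠ 0 := by
      intro h0
      rw [h0, zero_mul] at hag
      exact mul_ne_zero (pow_ne_zero 2 hβ) hr0 hag.symm
    have hγ0 : γ ≠ 0 := by rw [← sα]; simpa using hα0
    have hw : (θ*a*b*y/α) * σ (θ*a*b*y/α) = 1 := by
      rw [map_div₀, sα]
      simp only [map_mul, sθ, sb, ← hb, hy1]
      field_simp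
      rw [hag, ← hy]; ring
    obtain ⟨z, hz, hzw⟩ := hilb σ _ hw
    refine crit a z hz ?_ ?_ ?_
    · rw [← hb]; simpa using hβ
    · rw [← hb]
      have : p01*a^4+θ*a^2*b^2+p23*b^4 = b^4*(h0+h1*s+h2*s^2)^2 := by
        rw [CharTwo.add_sq, CharTwo.add_sq, mul_pow, mul_pow, hh0, hh1, hh2, hab]; ring
      rw [this]
      exact mul_ne_zero (pow_ne_zero 4 hb0) (pow_ne_zero 2 hc1)
    · rw [← hb]
      obtain ⟨T, hT⟩ : ∃ T, T = σ z := ⟨_, rfl⟩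
      rw [← hT] at hzw ⊢
      have hza : z*α = θ*a*b*y*T := by rw [hzw]; field_simp
      apply mul_left_cancel₀ hα0
      calc _ = (z*α)^2 + (z*α)*T*(θ*a*b)+T^2*(α*γ) := by rw [hα, hγ]; ring
        _ = 0 := by
          rw [hza, hag, ← hy]
          clear * -
          grind
        _ = _ := by ring)
  obtain ⟨f1, f2, f3⟩ := fin
  have hpp : p01*p12 = 0 := by
    rw [f1] at hκ
    have : p01*p12 = (p01*p12/θ^2)*θ^2 := by field_simp
    rw [this, ← hκ]; ring
  by_cases h12 : p12 = 0
  · rw [h12, mul_zero, add_zero] at Pl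
    refine ⟨?_, Or.inl h12⟩
    rcases mul_eq_zero.1 Pl with h | h
    · rw [← s01, h, map_zero]
    · exact h
  · have h01 : p01 = 0 := (mul_eq_zero.1 hpp).resolve_right h12
    rw [h01, zero_mul, zero_add] at Pl
    have h03 : p03 = 0 := (mul_eq_zero.1 Pl).resolve_right h12
    refine ⟨by rw [← s01, h01, map_zero], Or.inr ⟨h03, ?_⟩⟩
    rw [hθe, h03, zero_add, div_self h12] at f3
    simp [tr] at f3
    exact even_iff_two_dvd.2 ((CharP.cast_eq_zero_iff F 2 m).1 f3)
end la
end Kim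

namespace Kim
section lb
variable {F : Type*} [Field F] [CharP F 2]

theorem sq_inj2 (x y : F) (h : x^2 = y^2) : x = y := by
  have : (x+y)^2 = 0 := by rw [CharTwo.add_sq, h]; exact CharTwo.add_self_eq_zero _
  have := pow_eq_zero_iff (two_ne_zero) |>.1 this
  exact CharTwo.add_eq_zero.1 this

theorem lemB [Fintype F] (σ : F →+* F) (m : ℕ) (hm : 4 ≤ m) (hσ : ∀ x, σ x = x^2^m)
    (hcard : Fintype.card F = 2^(2*m)) (c0 c1 c2 c3 : F) (hNT : NT (UU σ c0 c1 c2 c3))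
    (t0 : F) (ht : σ t0 = t0) (ht0 : t0 ≠ 0) (ht1 : t0 ≠ 1)
    (e1 e2 : F) (he : e1 * σ e2 + σ e1 * e2 ≠ 0) (C0 C1 C2 C3 : F)
    (E0 : C0 = UU σ c0 c1 c2 c3 e1 e1) (E1 : C1 = UU σ c0 c1 c2 c3 e1 e2)
    (E2 : C2 = UU σ c0 c1 c2 c3 e2 e1) (E3 : C3 = UU σ c0 c1 c2 c3 e2 e2)
    (p01 p02 p03 p12 p13 p23 : F)
    (e01 : p01 = C0*σ C1+C1*σ C0) (e02 : p02 = C0*σ C2+C2*σ C0) (e03 : p03 = C0*σ C3+C3*σ C0)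
    (e12 : p12 = C1*σ C2+C2*σ C1) (e13 : p13 = C1*σ C3+C3*σ C1) (e23 : p23 = C2*σ C3+C3*σ C2)
    (h02 : p02 = 0) (h13 : p13 = 0) (hθ : p03 + p12 ≠ 0) : False := by
  have hσ2 := sig_sig σ m hσ hcard
  have he1 : e1 ≠ 0 := by rintro rfl; simp at he
  have hz := zero σ c0 c1 c2 c3 hNT t0 ht ht0 ht1 e1 he1
  rw [← E0] at hz
  have s01 : σ p01 = p01 := by rw [e01]; simp only [map_add, map_mul, hσ2]; ring
  have s23 : σ p23 = p23 := by rw [e23]; simp only [map_add, map_mul, hσ2]; ring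
  have s03 : σ p03 = p03 := by rw [e03]; simp only [map_add, map_mul, hσ2]; ring
  have s12 : σ p12 = p12 := by rw [e12]; simp only [map_add, map_mul, hσ2]; ring
  have Pl : p01*p23 + p03*p12 = 0 := by
    have : p01*p23+p02*p13+p03*p12 = 0 := by
      rw [e01, e02, e03, e12, e13, e23]
      clear * - 
      grind
    rw [h02] at this; simpa using this
  have Cr : C0*p12 = C1*p02+C2*p01 := by
    rw [e01, e02, e12]
    clear * -
    grind
  have crit := critR σ hσ2 c0 c1 c2 c3 hNT e1 e2 he C0 C1 C2 C3 E0 E1 E2 E3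
    p01 p02 p03 p12 p13 p23 e01 e02 e03 e12 e13 e23
  clear e01 e02 e03 e12 e13 e23 hNT E0 E1 E2 E3
  subst h02 h13
  obtain ⟨θ, hθe⟩ : ∃ θ, θ = p03 + p12 := ⟨_, rfl⟩
  rw [← hθe] at crit hθ
  have sθ : σ θ = θ := by rw [hθe, map_add, s03, s12]
  obtain ⟨κ, hκ⟩ := sqrt_ex (p01*p12/θ^2)
  obtain ⟨κ', hκ'⟩ := sqrt_ex (p23*p12/θ^2)
  obtain ⟨h0, hh0⟩ := sqrt_ex p23
  obtain ⟨h1, hh1⟩ := sqrt_ex θ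
  obtain ⟨h2, hh2⟩ := sqrt_ex p01
  have sκ : σ κ = κ := by
    apply sq_inj2; rw [← map_pow, hκ, map_div₀, map_mul, map_pow, s01, s12, sθ]
  have sκ' : σ κ' = κ' := by
    apply sq_inj2; rw [← map_pow, hκ', map_div₀, map_mul, map_pow, s23, s12, sθ]
  have h1ne : h1 ≠ 0 := by rintro rfl; apply hθ; rw [← hh1]; ring
  obtain ⟨g, hg⟩ := ord_ex m hcard (2^m-1) (Or.inr rfl) (by omega)
  have fin := tlem2 m hm (2^m-1) (Or.inr rfl) g hg κ κ' (tr m (p12/θ) + 1) h0 h1 h2 h1ne (by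
    intro s hs hsN
    have hss : σ s = s := by
      rw [hσ]
      have : 2^m = (2^m-1)+1 := by have := Nat.one_le_two_pow (n := m); omega
      rw [this, pow_succ, hsN, one_mul]
    by_contra hcon
    rw [mul_eq_zero, not_or] at hcon
    obtain ⟨hc1, hc2⟩ := hcon
    obtain ⟨u, hu⟩ : ∃ u, u = κ*s + κ' * s⁻¹ := ⟨_, rfl⟩
    have su : σ u = u := by rw [hu, map_add, map_mul, map_mul, map_inv₀, hss, sκ, sκ']
    obtain ⟨r, hr⟩ : ∃ r, r = u^2 + p12/θ := ⟨_, rfl⟩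
    have sr : σ r = r := by rw [hr, map_add, map_pow, map_div₀, su, s12, sθ]
    have htr : tr m r = 0 := by
      refine (tr_01 σ m hσ r sr).resolve_right ?_
      intro h
      apply hc2
      rw [Finset.sum_add_distrib]
      change tr m (κ*s) + tr m (κ' * s⁻¹) + _ = 0
      rw [← tr_add, ← hu, ← tr_sq σ m hσ u su, ← add_assoc, ← tr_add, ← hr, h]
      exact CharTwo.add_self_eq_zero _
    obtain ⟨y, hy, hy1⟩ := as_exists σ m hσ (by omega) hcard r sr
    rw [htr, add_zero] at hy1
    obtain ⟨α, hα⟩ : ∃ α, α = p01*s^2+p12 := ⟨_, rfl⟩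
    obtain ⟨γ, hγ⟩ : ∃ γ, γ = p12*s^2+p23 := ⟨_, rfl⟩
    have sα : σ α = α := by
      rw [hα]; simp only [map_add, map_mul, map_pow, s01, s12, hss]
    have hag : α*γ = (θ*s)^2*r := by
      have e1 : (θ*s)^2*r = p01*p12*s^4+p12*p23+p12*θ*s^2 := by
        rw [hr, hu, CharTwo.add_sq, mul_pow κ, mul_pow κ', hκ, hκ']
        field_simp
      rw [e1, hα, hγ, hθe]
      linear_combination s^2*Pl - s^2*p03*p12*(CharTwo.two_eq_zero (R := F))
    have hβ : θ*s ≠ 0 := mul_ne_zero hθ hs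
    have g1 : (0:F)*s^2+θ*s*1+0*1^2 ≠ 0 := by simpa using hβ
    have g2 : p01*s^4+θ*s^2*1^2+p23*1^4 ≠ 0 := by
      have : p01*s^4+θ*s^2*1^2+p23*1^4 = (h0+h1*s+h2*s^2)^2 := by
        rw [CharTwo.add_sq, CharTwo.add_sq, mul_pow, mul_pow, hh0, hh1, hh2]; ring
      rw [this]
      exact pow_ne_zero 2 hc1
    by_cases hα0 : α = 0
    · refine crit s 1 1 0 hss (map_one _) (map_one _) (map_zero _) (Or.inl one_ne_zero) g1 g2 ?_
      rw [hα] at hα0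
      linear_combination hα0
    · refine crit s 1 (θ*s*y) α hss (map_one _) ?_ sα (Or.inr hα0) g1 g2 ?_
      · simp only [map_mul, sθ, hss, hy1]
      · calc _ = α*((θ*s)^2*(y^2+y)+α*γ) := by
              rw [hγ]
              have : p01 * s ^ 2 + 0 * s * 1 + p12 * 1 ^ 2 = α := by rw [hα]; ring
              rw [this]; ring
          _ = 0 := by rw [hy, hag, CharTwo.add_self_eq_zero, mul_zero])
  obtain ⟨f1, f2, f3⟩ := fin
  have hpp : p01*p12 = 0 := by
    rw [f1] at hκ
    have : p01*p12 = (p01*p12/θ^2)*θ^2 := by field_simp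
    rw [this, ← hκ]; ring
  have h12 : p12 ≠ 0 := by
    intro h
    rw [h, zero_div, tr_zero] at f3
    simp at f3
  have h01 : p01 = 0 := (mul_eq_zero.1 hpp).resolve_right h12
  rw [h01] at Cr
  simp at Cr
  tauto

theorem lemC [Fintype F] (σ : F →+* F) (m : ℕ) (hm : 4 ≤ m) (hσ : ∀ x, σ x = x^2^m)
    (hcard : Fintype.card F = 2^(2*m)) (c0 c1 c2 c3 : F) (hNT : NT (UU σ c0 c1 c2 c3))
    (t0 : F) (ht : σ t0 = t0) (ht0 : t0 ≠ 0) (ht1 : t0 ≠ 1)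
    (e1 e2 : F) (he : e1 * σ e2 + σ e1 * e2 ≠ 0) (C0 C1 C2 C3 : F)
    (E0 : C0 = UU σ c0 c1 c2 c3 e1 e1) (E1 : C1 = UU σ c0 c1 c2 c3 e1 e2)
    (E2 : C2 = UU σ c0 c1 c2 c3 e2 e1) (E3 : C3 = UU σ c0 c1 c2 c3 e2 e2)
    (p01 p02 p03 p12 p13 p23 : F)
    (e01 : p01 = C0*σ C1+C1*σ C0) (e02 : p02 = C0*σ C2+C2*σ C0) (e03 : p03 = C0*σ C3+C3*σ C0)
    (e12 : p12 = C1*σ C2+C2*σ C1) (e13 : p13 = C1*σ C3+C3*σ C1) (e23 : p23 = C2*σ C3+C3*σ C2)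
    (h02 : p02 = 0) (h13 : p13 ≠ 0) (hθ : p03 + p12 = 0) : False := by
  have hσ2 := sig_sig σ m hσ hcard
  have he1 : e1 ≠ 0 := by rintro rfl; simp at he
  have hz := zero σ c0 c1 c2 c3 hNT t0 ht ht0 ht1 e1 he1
  rw [← E0] at hz
  have s01 : σ p01 = p01 := by rw [e01]; simp only [map_add, map_mul, hσ2]; ring
  have s23 : σ p23 = p23 := by rw [e23]; simp only [map_add, map_mul, hσ2]; ring
  have s13 : σ p13 = p13 := by rw [e13]; simp only [map_add, map_mul, hσ2]; ring
  have s12 : σ p12 = p12 := by rw [e12]; simp only [map_add, map_mul, hσ2]; ring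
  have h03 : p03 = p12 := CharTwo.add_eq_zero.1 hθ
  have Pl : p01*p23 + p12^2 = 0 := by
    have : p01*p23+p02*p13+p03*p12 = 0 := by
      rw [e01, e02, e03, e12, e13, e23]
      clear * - 
      grind
    rw [h02, h03] at this; linear_combination this
  have Cr : C0*p13 = C1*p03+C3*p01 := by
    rw [e01, e03, e13]
    clear * -
    grind
  have crit := critR σ hσ2 c0 c1 c2 c3 hNT e1 e2 he C0 C1 C2 C3 E0 E1 E2 E3
    p01 p02 p03 p12 p13 p23 e01 e02 e03 e12 e13 e23
  rw [hθ] at crit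
  clear e01 e02 e03 e12 e13 e23 hNT E0 E1 E2 E3
  subst h02
  have h01 : p01 ≠ 0 := by
    intro h
    rw [h, zero_mul, zero_add] at Pl
    have h12 : p12 = 0 := pow_eq_zero_iff two_ne_zero |>.1 Pl
    rw [h, h03, h12, mul_zero, mul_zero, add_zero] at Cr
    exact mul_ne_zero hz h13 Cr
  obtain ⟨ν', hν'⟩ := sqrt_ex (p01*p12/p13^2)
  obtain ⟨ν, hν⟩ := sqrt_ex ν'
  obtain ⟨h0', hh0'⟩ := sqrt_ex p23
  obtain ⟨h0, hh0⟩ := sqrt_ex h0'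
  obtain ⟨h1', hh1'⟩ := sqrt_ex p01
  obtain ⟨h1, hh1⟩ := sqrt_ex h1'
  have sν' : σ ν' = ν' := by
    apply sq_inj2; rw [← map_pow, hν', map_div₀, map_mul, map_pow, s01, s12, s13]
  have sν : σ ν = ν := by
    apply sq_inj2; rw [← map_pow, hν, sν']
  have h1ne : h1 ≠ 0 := by rintro rfl; apply h01; rw [← hh1', ← hh1]; ring
  obtain ⟨g, hg⟩ := ord_ex m hcard (2^m-1) (Or.inr rfl) (by omega)
  have fin := clem m hm (2^m-1) rfl g hg (p01/p13) (p12/p13+ν) (tr m (p12*p23/p13^2) + 1) h0 h1 h1ne (by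
    intro s hs hsN
    have hss : σ s = s := by
      rw [hσ]
      have : 2^m = (2^m-1)+1 := by have := Nat.one_le_two_pow (n := m); omega
      rw [this, pow_succ, hsN, one_mul]
    by_contra hcon
    rw [mul_eq_zero, not_or] at hcon
    obtain ⟨hc1, hc2⟩ := hcon
    obtain ⟨u, hu⟩ : ∃ u, u = ν*s := ⟨_, rfl⟩
    have su : σ u = u := by rw [hu, map_mul, hss, sν]
    obtain ⟨r, hr⟩ : ∃ r, r = p01/p13*s^3+p12/p13*s+(u^2)^2 + p12*p23/p13^2 := ⟨_, rfl⟩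
    have sr : σ r = r := by
      rw [hr]; simp only [map_add, map_mul, map_pow, map_div₀, su, s01, s12, s13, s23, hss]
    have htr : tr m r = 0 := by
      refine (tr_01 σ m hσ r sr).resolve_right ?_
      intro h
      apply hc2
      rw [Finset.sum_add_distrib]
      change tr m (p01/p13*s^3) + tr m ((p12/p13+ν)*s) + _ = 0
      rw [add_mul, ← hu, tr_add, ← tr_sq σ m hσ u su, ← tr_sq σ m hσ (u^2) (by rw [map_pow, su]),
        ← add_assoc, ← add_assoc, ← tr_add, ← tr_add, ← tr_add, ← hr, h]
      exact CharTwo.add_self_eq_zero _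
    obtain ⟨y, hy, hy1⟩ := as_exists σ m hσ (by omega) hcard r sr
    rw [htr, add_zero] at hy1
    obtain ⟨α, hα⟩ : ∃ α, α = p01*s^2+p12 := ⟨_, rfl⟩
    obtain ⟨γ, hγ⟩ : ∃ γ, γ = p12*s^2+p13*s+p23 := ⟨_, rfl⟩
    have sα : σ α = α := by
      rw [hα]; simp only [map_add, map_mul, map_pow, s01, s12, hss]
    have hag : α*γ = p13^2*r := by
      have e1 : p13^2*r = p01*p12*s^4+p01*p13*s^3+p12*p13*s+p12*p23 := by
        rw [hr, hu, mul_pow, mul_pow, hν, hν']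
        field_simp
        ring
      rw [e1, hα, hγ]
      linear_combination s^2*Pl
    have g1 : (0:F)*s^2+0*s*1+p13*1^2 ≠ 0 := by simpa using h13
    have g2 : p01*s^4+0*s^2*1^2+p23*1^4 ≠ 0 := by
      have : p01*s^4+0*s^2*1^2+p23*1^4 = ((h0+h1*s)^2)^2 := by
        rw [CharTwo.add_sq, CharTwo.add_sq, mul_pow, mul_pow, hh0, hh1, hh0', hh1']; ring
      rw [this]
      exact pow_ne_zero 2 (pow_ne_zero 2 hc1)
    by_cases hα0 : α = 0
    · refine crit s 1 1 0 hss (map_one _) (map_one _) (map_zero _) (Or.inl one_ne_zero) g1 g2 ?_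
      rw [hα] at hα0
      linear_combination hα0
    · refine crit s 1 (p13*y) α hss (map_one _) ?_ sα (Or.inr hα0) g1 g2 ?_
      · simp only [map_mul, s13, hy1]
      · calc _ = α*(p13^2*(y^2+y)+α*γ) := by
              rw [hγ]
              have : p01 * s ^ 2 + 0 * s * 1 + p12 * 1 ^ 2 = α := by rw [hα]; ring
              rw [this]; ring
          _ = 0 := by rw [hy, hag, CharTwo.add_self_eq_zero, mul_zero])
  exact div_ne_zero h01 h13 fin
end lb
end Kim

namespace Kim
section lc
variable {F : Type*} [Field F] [CharP F 2]

theorem t0_ex [Fintype F] (σ : F →+* F) (m : ℕ) (hm : 4 ≤ m) (hσ : ∀ x, σ x = x^2^m)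
    (hcard : Fintype.card F = 2^(2*m)) : ∃ t : F, σ t = t ∧ t ≠ 0 ∧ t ≠ 1 := by
  obtain ⟨g, hg⟩ := ord_ex m hcard (2^m-1) (Or.inr rfl) (by omega)
  have h16 : 16 ≤ 2^m := by
    calc 16 = 2^4 := rfl
      _ ≤ 2^m := Nat.pow_le_pow_right (by norm_num) hm
  refine ⟨g, ?_, g.ne_zero, ?_⟩
  · rw [hσ]
    have h1 : g^(2^m-1) = 1 := by rw [← hg]; exact pow_orderOf_eq_one g
    have : 2^m = (2^m-1)+1 := by omega
    rw [this, pow_succ, ← Units.val_pow_eq_pow_val, h1]; simp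
  · intro h
    have : g = 1 := Units.ext h
    rw [this, orderOf_one] at hg
    omega

theorem om_ex [Fintype F] (σ : F →+* F) (m : ℕ) (hm : 4 ≤ m) (hσ : ∀ x, σ x = x^2^m)
    (hcard : Fintype.card F = 2^(2*m)) : ∃ w : F, σ w + w ≠ 0 := by
  obtain ⟨g, hg⟩ := ord_ex m hcard (2^m+1) (Or.inl rfl) (by omega)
  refine ⟨g, ?_⟩
  intro h
  have h1 : g^(2^m+1) = 1 := by rw [← hg]; exact pow_orderOf_eq_one g
  have h2 : σ (g:F) * g = 1 := by
    rw [hσ, ← pow_succ, ← Units.val_pow_eq_pow_val, h1]; simp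
  rw [CharTwo.add_eq_zero.1 h] at h2
  have h3 : (g:F) = 1 := by apply sq_inj2; rw [one_pow, sq]; exact h2
  have : g = 1 := Units.ext h3
  rw [this, orderOf_one] at hg
  have := Nat.one_le_two_pow (n := m)
  omega

theorem caseD [Fintype F] (σ : F →+* F) (m : ℕ) (hm : 4 ≤ m) (hσ : ∀ x, σ x = x^2^m)
    (hcard : Fintype.card F = 2^(2*m)) (a1 a2 a3 : F) (ha1 : σ a1 = a1) (hNT : NT (UU σ a3 a2 a1 1))
    (h1 : 1 + a1^2 + a2*σ a2 + a3*σ a3 = 0) (h2 : a1 + σ a2 * a3 = 0) : False := by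
  have hσ2 := sig_sig σ m hσ hcard
  obtain ⟨t0, ht, ht0, ht1⟩ := t0_ex σ m hm hσ hcard
  have hz := zero σ _ _ _ _ hNT t0 ht ht0 ht1
  have h3 : a1 = σ a2 * a3 := CharTwo.add_eq_zero.1 h2
  have h4 : a1 = a2 * σ a3 := by
    rw [← ha1, h3, map_mul, hσ2]
  have h5 : (1 + a2*σ a2)*(1+a3*σ a3) = 0 := by
    have : a1^2 = (σ a2*a3)*(a2*σ a3) := by rw [← h3, ← h4, sq]
    linear_combination h1 - this
  rcases mul_eq_zero.1 h5 with h | h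
  · have hN : a2 * σ a2 = 1 := (CharTwo.add_eq_zero.1 h).symm
    obtain ⟨w, hw⟩ := sqrt_ex (σ a2)
    have hww : w * σ w = 1 := by
      apply sq_inj2
      rw [mul_pow, ← map_pow, hw, hσ2, mul_comm, hN, one_pow]
    obtain ⟨x, hx, hxw⟩ := hilb σ w hww
    apply hz x hx
    have : (σ x)^2 = a2*x^2 := by
      nth_rewrite 2 [hxw]
      rw [mul_pow, hw, ← mul_assoc, hN, one_mul]
    unfold UU
    rw [this, h3]
    linear_combination a3*x^3*hN + (a2*x^2*σ x + a3*x^3)*(CharTwo.two_eq_zero (R := F))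
  · have hN : a3 * σ a3 = 1 := (CharTwo.add_eq_zero.1 h).symm
    have h6 : a2 = a1*a3 := by rw [h4, mul_assoc, mul_comm (σ a3), hN, mul_one]
    have hU : ∀ z a, σ (UU σ a3 a2 a1 1 z a) = σ a3 * UU σ a3 a2 a1 1 z a := by
      intro z a
      unfold UU
      rw [h6]
      simp only [map_add, map_mul, map_pow, map_one, hσ2, ha1]
      linear_combination (-(z^2*a+a1*z^2*σ a))*hN
    obtain ⟨ω, hω⟩ := om_ex σ m hm hσ hcard
    have H : ∀ t, σ t = t → UU σ a3 a2 a1 1 ω 1 + t^2*UU σ a3 a2 a1 1 1 1 = 0 ∨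
        UU σ a3 a2 a1 1 1 ω + t*UU σ a3 a2 a1 1 1 1 = 0 := by
      intro t hts
      by_contra hcon
      rw [not_or] at hcon
      have k1 : UU σ a3 a2 a1 1 (ω+t) 1 = UU σ a3 a2 a1 1 ω 1 + t^2*UU σ a3 a2 a1 1 1 1 := by
        simp only [UU, map_add, map_one, hts, CharTwo.add_sq]; ring
      have k2 : UU σ a3 a2 a1 1 1 (ω+t) = UU σ a3 a2 a1 1 1 ω + t*UU σ a3 a2 a1 1 1 1 := by
        simp only [UU, map_add, map_one, hts]; ring
      refine core σ _ hNT (UU_hl σ _ _ _ _) (UU_hr σ _ _ _ _) 1 (ω+t) ?_ ?_ ?_ ?_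
      · intro h; apply hω; rw [← h, map_add, hts, map_one]
        linear_combination (-t) * (CharTwo.two_eq_zero (R := F))
      · rw [k1]; exact hcon.1
      · rw [k2]; exact hcon.2
      · rw [hU, hU]
        linear_combination (UU σ a3 a2 a1 1 (ω+t) 1*σ a3*UU σ a3 a2 a1 1 1 (ω+t))*(CharTwo.two_eq_zero (R := F))
    have hA := hz 1 one_ne_zero
    have H0 := H 0 (map_zero _)
    have H1 := H 1 (map_one _)
    have H2 := H t0 ht
    generalize UU σ a3 a2 a1 1 1 1 = A at *
    generalize UU σ a3 a2 a1 1 1 ω = B at *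
    generalize UU σ a3 a2 a1 1 ω 1 = C at *
    have n1 : t0 + 1 ≠ 0 := fun h => ht1 (CharTwo.add_eq_zero.1 h)
    have n0 : (t0+1)^2*A ≠ 0 := mul_ne_zero (pow_ne_zero 2 n1) hA
    have n2 : (t0+1)*A ≠ 0 := mul_ne_zero n1 hA
    have n3 : t0*A ≠ 0 := mul_ne_zero ht0 hA
    have n4 : t0^2*A ≠ 0 := mul_ne_zero (pow_ne_zero 2 ht0) hA
    clear H hU hz h1 h2 h3 h4 h5 h6 h hN hNT hσ hσ2
    rcases H0 with H0 | H0 <;> rcases H1 with H1 | H1 <;> rcases H2 with H2 | H2 <;> grind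

theorem id02 (c0 c1 c2 c3 d0 d1 d2 d3 X Y Z T : F) :
   (c0*X^2*X+c1*X^2*Y+c2*Y^2*X+c3*Y^2*Y)*(d0*Z^2*X+d1*Z^2*Y+d2*T^2*X+d3*T^2*Y)
   + (c0*Z^2*X+c1*Z^2*Y+c2*T^2*X+c3*T^2*Y)*(d0*X^2*X+d1*X^2*Y+d2*Y^2*X+d3*Y^2*Y)
   = (X*T+Y*Z)^2*((c0*d2+c2*d0)*X^2+(c0*d3+c3*d0+(c1*d2+c2*d1))*X*Y+(c1*d3+c3*d1)*Y^2) := by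
  grind

theorem idth (c0 c1 c2 c3 d0 d1 d2 d3 X Y Z T : F) :
   (c0*X^2*X+c1*X^2*Y+c2*Y^2*X+c3*Y^2*Y)*(d0*Z^2*Z+d1*Z^2*T+d2*T^2*Z+d3*T^2*T)
   + (c0*Z^2*Z+c1*Z^2*T+c2*T^2*Z+c3*T^2*T)*(d0*X^2*X+d1*X^2*Y+d2*Y^2*X+d3*Y^2*Y)
   + ((c0*X^2*Z+c1*X^2*T+c2*Y^2*Z+c3*Y^2*T)*(d0*Z^2*X+d1*Z^2*Y+d2*T^2*X+d3*T^2*Y)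
   + (c0*Z^2*X+c1*Z^2*Y+c2*T^2*X+c3*T^2*Y)*(d0*X^2*Z+d1*X^2*T+d2*Y^2*Z+d3*Y^2*T))
   = (X*T+Y*Z)^3*(c0*d3+c3*d0+(c1*d2+c2*d1)) := by
  grind

/-- real coordinates -/
theorem caseBC [Fintype F] (σ : F →+* F) (m : ℕ) (hm : 4 ≤ m) (hσ : ∀ x, σ x = x^2^m)
    (hcard : Fintype.card F = 2^(2*m)) (c0 c1 c2 c3 : F) (hNT : NT (UU σ c0 c1 c2 c3))
    (θ1 θ2 : F) (h1 : θ1 = c0*σ c0+c3*σ c3 + (c1*σ c1+c2*σ c2)) (h2 : θ2 = c0*σ c1+c2*σ c3)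
    (e1 e2 : F) (he : e1 * σ e2 + σ e1 * e2 ≠ 0)
    (hb : θ2*e1^2+θ1*e1*σ e1+σ θ2*(σ e1)^2 = 0)
    (hb2 : (θ1 ≠ 0 ∧ θ2*e2^2+θ1*e2*σ e2+σ θ2*(σ e2)^2 = 0) ∨
       (θ1 = 0 ∧ θ2*e2^2+θ1*e2*σ e2+σ θ2*(σ e2)^2 ≠ 0)) : False := by
  have hσ2 := sig_sig σ m hσ hcard
  obtain ⟨t0, ht, ht0, ht1⟩ := t0_ex σ m hm hσ hcard
  have hs : σ θ2 = c1*σ c0+c3*σ c2 := by rw [h2]; simp only [map_add, map_mul, hσ2]; ring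
  have sU : ∀ z a, σ (UU σ c0 c1 c2 c3 z a) = σ c3 * z^2*a+σ c2*z^2*σ a+σ c1*(σ z)^2*a+σ c0*(σ z)^2*σ a := by
    intro z a; simp only [UU, map_add, map_mul, map_pow, hσ2]; ring
  have A02 := id02 c0 c1 c2 c3 (σ c3) (σ c2) (σ c1) (σ c0) e1 (σ e1) e2 (σ e2)
  have A13 := id02 c0 c1 c2 c3 (σ c3) (σ c2) (σ c1) (σ c0) e2 (σ e2) e1 (σ e1)
  have Ath := idth c0 c1 c2 c3 (σ c3) (σ c2) (σ c1) (σ c0) e1 (σ e1) e2 (σ e2)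
  simp only [← sU] at A02 A13 Ath
  rw [← h2, ← h1, ← hs, hb, mul_zero] at A02
  rw [← h2, ← h1, ← hs] at A13
  rw [← h1] at Ath
  have he' : (e2*σ e1+σ e2*e1) ≠ 0 := by intro h; apply he; rw [← h]; ring
  rcases hb2 with ⟨hn, hb2⟩ | ⟨hn, hb2⟩
  · rw [hb2, mul_zero] at A13
    refine lemB σ m hm hσ hcard c0 c1 c2 c3 hNT t0 ht ht0 ht1 e1 e2 he _ _ _ _ rfl rfl rfl rfl _ _ _ _ _ _ rfl rfl rfl rfl rfl rfl A02 ?_ ?_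
    · rw [← A13]; simp only [UU]; ring
    · intro h
      apply mul_ne_zero (pow_ne_zero 3 he) hn
      rw [← Ath, ← h]; simp only [UU]
  · rw [hn, mul_zero] at Ath
    rw [hn] at hb2
    rw [hn] at A13
    refine lemC σ m hm hσ hcard c0 c1 c2 c3 hNT t0 ht ht0 ht1 e1 e2 he _ _ _ _ rfl rfl rfl rfl _ _ _ _ _ _ rfl rfl rfl rfl rfl rfl A02 ?_ ?_
    · intro h
      apply mul_ne_zero (pow_ne_zero 2 he') hb2
      rw [← A13, ← h]; simp only [UU]; ring
    · rw [← Ath]; simp only [UU]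

theorem caseB [Fintype F] (σ : F →+* F) (m : ℕ) (hm : 4 ≤ m) (hσ : ∀ x, σ x = x^2^m)
    (hcard : Fintype.card F = 2^(2*m)) (c0 c1 c2 c3 : F) (hNT : NT (UU σ c0 c1 c2 c3))
    (θ1 θ2 : F) (h1 : θ1 = c0*σ c0+c3*σ c3 + (c1*σ c1+c2*σ c2)) (h2 : θ2 = c0*σ c1+c2*σ c3)
    (hθ1 : θ1 ≠ 0) (htr : tr m (θ2 * σ θ2/θ1^2) = 1) : False := by
  have hσ2 := sig_sig σ m hσ hcard
  have sθ1 : σ θ1 = θ1 := by rw [h1]; simp only [map_add, map_mul, hσ2]; ring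
  have hθ2 : θ2 ≠ 0 := by
    intro h
    rw [h, zero_mul, zero_div, tr_zero] at htr
    exact zero_ne_one htr
  have sθ2 : σ θ2 ≠ 0 := by simpa using hθ2
  obtain ⟨y, hy, sy⟩ := as_exists σ m hσ (by omega) hcard (θ2 * σ θ2/θ1^2) (by
    simp only [map_div₀, map_mul, map_pow, hσ2, sθ1]; ring)
  rw [htr] at sy
  have hy' : θ1^2*(y^2+y) = θ2*σ θ2 := by rw [hy]; field_simp
  clear hy
  have key : ∀ y, θ1^2*(y^2+y) = θ2*σ θ2 → σ y = y+1 → ∃ e, e ≠ 0 ∧ θ2*e = θ1*y*σ e ∧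
      θ2*e^2+θ1*e*σ e+σ θ2*(σ e)^2 = 0 := by
    intro y hy sy
    obtain ⟨e, he, hew⟩ := hilb σ (θ1*y/θ2) (by
      rw [map_div₀, map_mul, sθ1, sy]
      field_simp
      rw [← hy]; ring)
    have h3 : θ2*e = θ1*y*σ e := by nth_rewrite 1 [hew]; field_simp
    refine ⟨e, he, h3, ?_⟩
    apply mul_left_cancel₀ hθ2
    calc _ = (θ2*e)^2+θ1*(θ2*e)*σ e + θ2*σ θ2*(σ e)^2 := by ring
      _ = 0 := by rw [h3, ← hy]; clear * -; grind
      _ = _ := by ring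
  obtain ⟨e1, he1, k1, b1⟩ := key y hy' sy
  obtain ⟨e2, he2, k2, b2⟩ := key (y+1) (by rw [← hy']; clear * -; grind) (by rw [map_add, sy, map_one])
  have se1 : σ e1 ≠ 0 := by simpa using he1
  have se2 : σ e2 ≠ 0 := by simpa using he2
  refine caseBC σ m hm hσ hcard c0 c1 c2 c3 hNT θ1 θ2 h1 h2 e1 e2 ?_ b1 (Or.inl ⟨hθ1, b2⟩)
  intro h
  apply mul_ne_zero (mul_ne_zero hθ1 se1) se2
  calc _ = (θ1*y*σ e1)*σ e2 + σ e1*(θ1*(y+1)*σ e2) := by clear * -; grind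
    _ = θ2*(e1 * σ e2 + σ e1 * e2) := by rw [← k1, ← k2]; ring
    _ = 0 := by rw [h, mul_zero]

theorem caseC [Fintype F] (σ : F →+* F) (m : ℕ) (hm : 4 ≤ m) (hσ : ∀ x, σ x = x^2^m)
    (hcard : Fintype.card F = 2^(2*m)) (c0 c1 c2 c3 : F) (hNT : NT (UU σ c0 c1 c2 c3))
    (θ1 θ2 : F) (h1 : θ1 = c0*σ c0+c3*σ c3 + (c1*σ c1+c2*σ c2)) (h2 : θ2 = c0*σ c1+c2*σ c3)
    (hθ1 : θ1 = 0) (hθ2 : θ2 ≠ 0) : False := by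
  have hσ2 := sig_sig σ m hσ hcard
  have sθ2 : σ θ2 ≠ 0 := by simpa using hθ2
  obtain ⟨w, hw⟩ := sqrt_ex (σ θ2/θ2)
  obtain ⟨e, he, hew⟩ := hilb σ w (by
    apply sq_inj2
    rw [mul_pow, ← map_pow, hw, map_div₀, hσ2]
    field_simp)
  have se : σ e ≠ 0 := by simpa using he
  obtain ⟨ω, hω⟩ := om_ex σ m hm hσ hcard
  have k : θ2*e^2 = σ θ2*(σ e)^2 := by
    nth_rewrite 1 [hew]
    rw [mul_pow, hw]; field_simp
  refine caseBC σ m hm hσ hcard c0 c1 c2 c3 hNT θ1 θ2 h1 h2 e (e*ω) ?_ ?_ (Or.inr ⟨hθ1, ?_⟩)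
  · rw [map_mul]
    intro h
    apply mul_ne_zero (mul_ne_zero he se) hω
    rw [← h]; ring
  · rw [k, hθ1]; linear_combination (σ θ2*(σ e)^2)*(CharTwo.two_eq_zero (R := F))
  · rw [hθ1]
    intro h
    apply mul_ne_zero (mul_ne_zero sθ2 (pow_ne_zero 2 se)) (pow_ne_zero 2 hω)
    rw [← h, map_mul, CharTwo.add_sq, mul_pow, mul_pow, ← mul_assoc, ← mul_assoc, k]; ring
end lc
end Kim

namespace Kim
section ld
variable {F : Type*} [Field F] [CharP F 2]

theorem NT_L (σ : F →+* F) (hσ2 : ∀ x, σ (σ x) = x) (e b : F) (hb : b = σ e) (hΔ : 1 + e*b ≠ 0)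
    (c0 c1 c2 c3 : F) : NT (UU σ c0 c1 c2 c3) ↔ NT (UU σ (c0+c1*b+c2*b^2+c3*b^3)
      (c0*e+c1+c2*b^2*e+c3*b^2) (c0*e^2+c1*e^2*b+c2+c3*b) (c0*e^3+c1*e^2+c2*e+c3)) := by
  have sb : σ b = e := by rw [hb, hσ2]
  have hU : ∀ z a, UU σ (c0+c1*b+c2*b^2+c3*b^3)
      (c0*e+c1+c2*b^2*e+c3*b^2) (c0*e^2+c1*e^2*b+c2+c3*b) (c0*e^3+c1*e^2+c2*e+c3) z a
      = UU σ c0 c1 c2 c3 (z+e*σ z) (a+e*σ a) := by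
    intro z a
    simp only [UU, map_add, map_mul, hσ2, ← hb, CharTwo.add_sq]
    ring
  have hinj : ∀ x, x + e*σ x = 0 → x = 0 := by
    intro x h
    have h' : σ x + b*x = 0 := by
      have := congrArg σ h
      simpa only [map_add, map_mul, hσ2, ← hb, map_zero] using this
    have : (1+e*b)*x = 0 := by
      linear_combination h + e*h' - e*σ x*(CharTwo.two_eq_zero (R := F))
    exact (mul_eq_zero.1 this).resolve_left hΔ
  have hsurj : ∀ w, ∃ x, x + e*σ x = w := by
    intro w
    have sΔ : σ (1+e*b) = 1+e*b := by rw [map_add, map_mul, map_one, ← hb, sb]; ring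
    refine ⟨(w+e*σ w)/(1+e*b), ?_⟩
    rw [map_div₀, sΔ, map_add, map_mul, hσ2, ← hb]
    field_simp
    linear_combination (e*σ w)*(CharTwo.two_eq_zero (R := F))
  constructor
  · intro h a ha x hx
    rw [hU, hU] at hx
    rcases h _ (fun h0 => ha (hinj a h0)) _ hx with h1 | h1
    · exact Or.inl (hinj x h1)
    · right
      apply CharTwo.add_eq_zero.1
      apply hinj
      rw [map_add]
      linear_combination h1 + (a+e*σ a)*(CharTwo.two_eq_zero (R := F))
  · intro h a' ha x' hx
    obtain ⟨a, rfl⟩ := hsurj a'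
    obtain ⟨x, rfl⟩ := hsurj x'
    rw [← hU, ← hU] at hx
    rcases h a (by rintro rfl; simp at ha) x hx with h1 | h1
    · left; simp [h1]
    · right; rw [h1]

theorem tr02 (c0 c1 c2 c3 d0 d1 d2 d3 e b : F) :
    (c0+c1*b+c2*b^2+c3*b^3)*(d0*e^2+d1*e^2*b+d2+d3*b)+(c0*e^2+c1*e^2*b+c2+c3*b)*(d0+d1*b+d2*b^2+d3*b^3)
    = (1+e*b)^2*((c0*d2+c2*d0)+((c0*d3+c3*d0)+(c1*d2+c2*d1))*b+(c1*d3+c3*d1)*b^2) := by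
  grind

theorem tr23 (c0 c1 c2 c3 d0 d1 d2 d3 e b : F) :
    (c0*e^2+c1*e^2*b+c2+c3*b)*(d0*e^3+d1*e^2+d2*e+d3)+(c0*e^3+c1*e^2+c2*e+c3)*(d0*e^2+d1*e^2*b+d2+d3*b)
    = (1+e*b)*((c0*d1+c1*d0)*e^4+((c0*d3+c3*d0)+(c1*d2+c2*d1))*e^2+(c2*d3+c3*d2)) := by
  grind

theorem tr12 (c0 c1 c2 c3 d0 d1 d2 d3 e b : F) :
    (c0*e+c1+c2*b^2*e+c3*b^2)*(d0*e^2+d1*e^2*b+d2+d3*b)+(c0*e^2+c1*e^2*b+c2+c3*b)*(d0*e+d1+d2*b^2*e+d3*b^2)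
    = (1+e*b)*((c0*d1+c1*d0)*e^2+(c2*d3+c3*d2)*b^2+(c0*d2+c2*d0)*e*(1+e*b)+(c1*d3+c3*d1)*b*(1+e*b)
      +(c1*d2+c2*d1)*(1+e*b)^2+((c0*d3+c3*d0)+(c1*d2+c2*d1))*(e*b)) := by
  grind

theorem trth (c0 c1 c2 c3 d0 d1 d2 d3 e b : F) :
    ((c0+c1*b+c2*b^2+c3*b^3)*(d0*e^3+d1*e^2+d2*e+d3)+(c0*e^3+c1*e^2+c2*e+c3)*(d0+d1*b+d2*b^2+d3*b^3))
    + ((c0*e+c1+c2*b^2*e+c3*b^2)*(d0*e^2+d1*e^2*b+d2+d3*b)+(c0*e^2+c1*e^2*b+c2+c3*b)*(d0*e+d1+d2*b^2*e+d3*b^2))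
    = (1+e*b)^3*((c0*d3+c3*d0)+(c1*d2+c2*d1)) := by
  grind

/-- The gamma equivalences -/
theorem gam1 (t1 t2 s2 t3 s3 t4 e b : F) (hΔ : 1+e*b ≠ 0) (ht1 : t1 ≠ 0)
    (h2 : t2*(1+e*b) = t1*b) (h2' : s2*(1+e*b) = t1*e) :
    t1^2*t4+t1*t2*s2+t2^2*t3+s2^2*s3 = 0 ↔
    s3*e^2+t3*b^2+t2*e*(1+e*b)+s2*b*(1+e*b)+t4*(1+e*b)^2+t1*(e*b) = 0 := by
  have key : (1+e*b)^2*(t1^2*t4+t1*t2*s2+t2^2*t3+s2^2*s3) =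
      t1^2*(s3*e^2+t3*b^2+t2*e*(1+e*b)+s2*b*(1+e*b)+t4*(1+e*b)^2+t1*(e*b)) := by
    have e1 : (1+e*b)^2*(t1^2*t4+t1*t2*s2+t2^2*t3+s2^2*s3) =
      (1+e*b)^2*t1^2*t4 + t1*(t2*(1+e*b))*(s2*(1+e*b))+(t2*(1+e*b))^2*t3+(s2*(1+e*b))^2*s3 := by ring
    have e2 : s3*e^2+t3*b^2+t2*e*(1+e*b)+s2*b*(1+e*b)+t4*(1+e*b)^2+t1*(e*b)
      = s3*e^2+t3*b^2+(t2*(1+e*b))*e+(s2*(1+e*b))*b+t4*(1+e*b)^2+t1*(e*b) := by ring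
    rw [e1, e2, h2, h2']
    clear * -
    grind
  constructor
  · intro h
    rw [h, mul_zero] at key
    exact (mul_eq_zero.1 key.symm).resolve_left (pow_ne_zero 2 ht1)
  · intro h
    rw [h, mul_zero] at key
    exact (mul_eq_zero.1 key).resolve_left (pow_ne_zero 2 hΔ)

theorem gam2 (σ : F →+* F) (hσ2 : ∀ x, σ (σ x) = x) (t1 t2 s2 t3 s3 e b : F) (hΔ : 1+e*b ≠ 0) (ht1 : t1 ≠ 0)
    (h2 : t2*(1+e*b) = t1*b) (h2' : s2*(1+e*b) = t1*e)
    (k1 : σ t1 = t1) (k3 : s3 = σ t3) (kb : b = σ e) :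
    t1^2*t3+t1*s2^2+t2^2*t3+s2^2*s3 = 0 ↔ s3*e^4+t1*e^2+t3 = 0 := by
  have sb : σ b = e := by rw [kb, hσ2]
  have ss : σ s3 = t3 := by rw [k3, hσ2]
  have key : (1+e*b)^2*(t1^2*t3+t1*s2^2+t2^2*t3+s2^2*s3) =
      t1^2*(t3*(1+e*b)^2+t1*e^2+(b^2*t3+e^2*s3)) := by
    have e1 : (1+e*b)^2*(t1^2*t3+t1*s2^2+t2^2*t3+s2^2*s3) =
      (1+e*b)^2*t1^2*t3 + t1*(s2*(1+e*b))^2+(t2*(1+e*b))^2*t3+(s2*(1+e*b))^2*s3 := by ring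
    rw [e1, h2, h2']
    ring
  have key2 : t1^2*t3+t1*s2^2+t2^2*t3+s2^2*s3 = 0 ↔ t3*(1+e*b)^2+t1*e^2+(b^2*t3+e^2*s3) = 0 := by
    constructor
    · intro h
      rw [h, mul_zero] at key
      exact (mul_eq_zero.1 key.symm).resolve_left (pow_ne_zero 2 ht1)
    · intro h
      rw [h, mul_zero] at key
      exact (mul_eq_zero.1 key).resolve_left (pow_ne_zero 2 hΔ)
  rw [key2]
  have hΔ2 := pow_ne_zero 2 hΔ
  clear key key2 h2 h2'
  constructor
  · intro h
    have h' : s3*(1+e*b)^2+t1*b^2+(b^2*t3+e^2*s3) = 0 := by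
      have := congrArg σ h
      simp only [map_add, map_mul, map_pow, map_one, map_zero, k1, ← k3, ← kb, sb, ss] at this
      linear_combination this
    have hρ : (b^2*t3+e^2*s3)*((1+e)^2*(1+b)^2) = 0 := by
      calc _ = b^2*(t3*(1+e*b)^2+t1*e^2+(b^2*t3+e^2*s3)) + e^2*(s3*(1+e*b)^2+t1*b^2+(b^2*t3+e^2*s3)) := by
            clear * -; grind
        _ = 0 := by rw [h, h']; ring
    have he : 1+e ≠ 0 := by
      intro h0
      apply hΔ
      have : e = 1 := (CharTwo.add_eq_zero.1 h0).symm
      rw [kb, this, map_one, mul_one]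
      exact CharTwo.add_self_eq_zero _
    have hb' : 1+b ≠ 0 := by
      intro h0
      apply he
      have := congrArg σ h0
      simpa only [map_add, map_one, sb, map_zero] using this
    have hρ0 := (mul_eq_zero.1 hρ).resolve_right (mul_ne_zero (pow_ne_zero 2 he) (pow_ne_zero 2 hb'))
    rw [hρ0, add_zero] at h h'
    apply (mul_eq_zero.1 ?_).resolve_left hΔ2
    calc _ = e^4*(s3*(1+e*b)^2+t1*b^2)+(t3*(1+e*b)^2+t1*e^2) := by clear * -; grind
      _ = 0 := by rw [h, h']; ring
  · intro h
    have h' : t3*b^4+t1*b^2+s3 = 0 := by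
      have := congrArg σ h
      simpa only [map_add, map_mul, map_pow, map_zero, k1, ← k3, ← kb, sb, ss] using this
    have m3 : t3*(1+e*b)^2+t1*e^2 = 0 := by
      apply (mul_eq_zero.1 ?_).resolve_left hΔ2
      calc (1+e*b)^2*(t3*(1+e*b)^2+t1*e^2) = e^4*(t3*b^4+t1*b^2+s3)+(s3*e^4+t1*e^2+t3) := by clear * -; grind
        _ = 0 := by rw [h, h']; ring
    have m3' : s3*(1+e*b)^2+t1*b^2 = 0 := by
      have := congrArg σ m3
      simp only [map_add, map_mul, map_pow, map_one, map_zero, k1, ← kb, sb, ← k3] at this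
      linear_combination this
    have hρ : b^2*t3+e^2*s3 = 0 := by
      apply (mul_eq_zero.1 ?_).resolve_left hΔ2
      calc _ = b^2*(t3*(1+e*b)^2+t1*e^2)+e^2*(s3*(1+e*b)^2+t1*b^2) := by clear * -; grind
        _ = 0 := by rw [m3, m3']; ring
    rw [m3, hρ, add_zero]

theorem nice1 (σ : F →+* F) (hσ2 : ∀ x, σ (σ x) = x) (c0 c3 : F) (h : c0*σ c0+c3*σ c3 ≠ 0) :
    NT (UU σ c0 0 0 c3) := by
  intro a ha x hx
  have h1 : c0*(x^2*a+a^2*x)+c3*σ (x^2*a+a^2*x) = 0 := by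
    rw [← hx]; simp only [UU, map_add, map_mul, map_pow]; ring
  have h2 : σ c0*σ (x^2*a+a^2*x)+σ c3*(x^2*a+a^2*x) = 0 := by
    have := congrArg σ h1
    rw [map_add, map_mul, map_mul, hσ2, map_zero] at this; exact this
  have h3 : (c0*σ c0+c3*σ c3)*(x^2*a+a^2*x) = 0 := by
    linear_combination σ c0*h1 + c3*h2 - c3*σ c0*σ (x^2*a+a^2*x)*(CharTwo.two_eq_zero (R := F))
  have h4 := (mul_eq_zero.1 h3).resolve_left h
  have h5 : a*(x*(x+a)) = 0 := by linear_combination h4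
  rcases mul_eq_zero.1 ((mul_eq_zero.1 h5).resolve_left ha) with h | h
  · exact Or.inl h
  · exact Or.inr (CharTwo.add_eq_zero.1 h)

theorem nice2 (σ : F →+* F) (m : ℕ) (hm : Even m) (hσ : ∀ x, σ x = x^2^m) (hσ2 : ∀ x, σ (σ x) = x)
    (c1 c2 : F) (h : c1*σ c1+c2*σ c2 ≠ 0) :
    NT (UU σ 0 c1 c2 0) := by
  intro a ha x hx
  have h1 : c1*(x^2*σ a+a^2*σ x)+c2*σ (x^2*σ a+a^2*σ x) = 0 := by
    rw [← hx]; simp only [UU, map_add, map_mul, map_pow, hσ2]; ring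
  have h2 : σ c1*σ (x^2*σ a+a^2*σ x)+σ c2*(x^2*σ a+a^2*σ x) = 0 := by
    have := congrArg σ h1
    rw [map_add, map_mul, map_mul, hσ2, map_zero] at this; exact this
  have h3 : (c1*σ c1+c2*σ c2)*(x^2*σ a+a^2*σ x) = 0 := by
    linear_combination σ c1*h1 + c2*h2 - c2*σ c1*σ (x^2*σ a+a^2*σ x)*(CharTwo.two_eq_zero (R := F))
  have h4 := (mul_eq_zero.1 h3).resolve_left h
  obtain ⟨y, hy⟩ : ∃ y, x = a*y := ⟨x/a, by field_simp⟩
  have sa : σ a ≠ 0 := by simpa using ha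
  have h5 : σ y = y^2 := by
    rw [hy, map_mul] at h4
    have : a^2*σ a*(y^2+σ y) = 0 := by linear_combination h4
    exact (CharTwo.add_eq_zero.1 ((mul_eq_zero.1 this).resolve_left (mul_ne_zero (pow_ne_zero 2 ha) sa))).symm
  have h6 : y^4 = y := by
    have := congrArg σ h5
    rw [hσ2, map_pow, h5] at this
    linear_combination -this
  have h7 : σ y = y := by
    rw [hσ]
    obtain ⟨k, rfl⟩ := hm
    rw [← two_mul, pow_mul]
    clear * - h6
    induction k with
    | zero => simp
    | succ n ih => rw [pow_succ, pow_mul, ih]; exact h6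
  rw [h7] at h5
  have h8 : y*(y+1) = 0 := by linear_combination y*(CharTwo.two_eq_zero (R := F)) - h5
  rcases mul_eq_zero.1 h8 with h | h
  · left; rw [hy, h, mul_zero]
  · right; rw [hy, CharTwo.add_eq_zero.1 h, mul_one]

/-- normal form -/
theorem back (σ : F →+* F) (m : ℕ) (hσ : ∀ x, σ x = x^2^m) (hσ2 : ∀ x, σ (σ x) = x)
    (c0 c1 c2 c3 : F) (p01 p02 p03 p12 p13 p23 : F)
    (e01 : p01 = c0*σ c2+c1*σ c3) (e02 : p02 = c0*σ c1+c2*σ c3) (e03 : p03 = c0*σ c0+c3*σ c3)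
    (e12 : p12 = c1*σ c1+c2*σ c2) (e13 : p13 = c1*σ c0+c3*σ c2) (e23 : p23 = c2*σ c0+c3*σ c1)
    (h02 : p02 = 0) (hθ : p03 + p12 ≠ 0) (h : p12 = 0 ∨ (p23 = 0 ∧ Even m)) :
    NT (UU σ c0 c1 c2 c3) := by
  have s01 : σ p01 = p23 := by rw [e01, e23]; simp only [map_add, map_mul, hσ2]; ring
  have s23 : σ p23 = p01 := by rw [← s01, hσ2]
  have s02 : σ p02 = p13 := by rw [e02, e13]; simp only [map_add, map_mul, hσ2]; ring
  have h13 : p13 = 0 := by rw [← s02, h02, map_zero]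
  have Pl : p01*p23 + p03*p12 = 0 := by
    have : p01*p23+p02*p13+p03*p12 = 0 := by
      rw [e01, e02, e03, e12, e13, e23]
      clear * - 
      grind
    rw [h02] at this; simpa using this
  have hz : p23 = 0 := by
    rcases h with h | h
    · rw [h, mul_zero, add_zero] at Pl
      rcases mul_eq_zero.1 Pl with h' | h'
      · rw [← s01, h', map_zero]
      · exact h'
    · exact h.1
  have hz' : p01 = 0 := by rw [← s23, hz, map_zero]
  by_cases h12 : p12 = 0
  · rw [h12, add_zero] at hθ
    have q1 : c1*p03 = c0*p13+c3*p01 := by rw [e03, e13, e01]; clear * -; grind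
    have q2 : c2*p03 = c0*p23+c3*p02 := by rw [e03, e23, e02]; clear * -; grind
    rw [h13, hz', mul_zero, mul_zero, add_zero] at q1
    rw [h02, hz, mul_zero, mul_zero, add_zero] at q2
    rw [(mul_eq_zero.1 q1).resolve_right hθ, (mul_eq_zero.1 q2).resolve_right hθ]
    apply nice1 σ hσ2
    rw [← e03]; exact hθ
  · have hm : Even m := by
      rcases h with h | h
      · exact absurd h h12
      · exact h.2
    have q1 : c0*p12 = c1*p02+c2*p01 := by rw [e12, e02, e01]; clear * -; grind
    have q2 : c3*p12 = c1*p23+c2*p13 := by rw [e12, e23, e13]; clear * -; grind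
    rw [h02, hz', mul_zero, mul_zero, add_zero] at q1
    rw [h13, hz, mul_zero, mul_zero, add_zero] at q2
    rw [(mul_eq_zero.1 q1).resolve_right h12, (mul_eq_zero.1 q2).resolve_right h12]
    apply nice2 σ m hm hσ hσ2
    rw [← e12]; exact h12
end ld
end Kim

namespace Kim
section le
variable {F : Type*} [Field F] [CharP F 2]

theorem exE [Fintype F] (σ : F →+* F) (m : ℕ) (hm : 4 ≤ m) (hσ : ∀ x, σ x = x^2^m)
    (hcard : Fintype.card F = 2^(2*m)) (t1 t2 : F) (k1 : σ t1 = t1) (ht1 : t1 ≠ 0)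
    (htr : tr m (t2*σ t2/t1^2) = 0) : ∃ e, 1 + e*σ e ≠ 0 ∧ t2*(1+e*σ e) = t1*σ e := by
  have hσ2 := sig_sig σ m hσ hcard
  by_cases h : t2 = 0
  · exact ⟨0, by simp, by simp [h]⟩
  have s2 : σ t2 ≠ 0 := by simpa using h
  obtain ⟨y, hy, sy⟩ := as_exists σ m hσ (by omega) hcard (t2 * σ t2/t1^2) (by
    simp only [map_div₀, map_mul, map_pow, hσ2, k1]; ring)
  rw [htr, add_zero] at sy
  have hy' : t1^2*(y^2+y) = t2*σ t2 := by rw [hy]; field_simp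
  have hy0 : y ≠ 0 := by
    rintro rfl
    apply mul_ne_zero h s2
    rw [← hy']; ring
  have eq : t2*(1+(t1*y/t2)*σ (t1*y/t2)) = t1*σ (t1*y/t2) := by
    rw [map_div₀, map_mul, k1, sy]
    field_simp
    rw [← hy']
    linear_combination t1^2*y^2*(CharTwo.two_eq_zero (R := F))
  refine ⟨t1*y/t2, ?_, eq⟩
  intro h0
  rw [h0, mul_zero, map_div₀, map_mul, k1, sy] at eq
  exact mul_ne_zero ht1 (div_ne_zero (mul_ne_zero ht1 hy0) s2) eq.symm

theorem caseA [Fintype F] (σ : F →+* F) (m : ℕ) (hm : 4 ≤ m) (hσ : ∀ x, σ x = x^2^m)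
    (hcard : Fintype.card F = 2^(2*m)) (c0 c1 c2 c3 t1 t2 t3 t4 : F)
    (h1 : t1 = (c0*σ c0+c3*σ c3)+(c1*σ c1+c2*σ c2)) (h2 : t2 = c0*σ c1+c2*σ c3)
    (h3 : t3 = c2*σ c0+c3*σ c1) (h4 : t4 = c1*σ c1+c2*σ c2) (ht1 : t1 ≠ 0)
    (htr : tr m (t2*σ t2/t1^2) = 0) :
    NT (UU σ c0 c1 c2 c3) ↔ (t1^2*t4+t1*t2*σ t2+t2^2*t3+(σ t2)^2*σ t3 = 0 ∨
      (Even m ∧ t1^2*t3+t1*(σ t2)^2+t2^2*t3+(σ t2)^2*σ t3 = 0)) := by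
  have hσ2 := sig_sig σ m hσ hcard
  have k1 : σ t1 = t1 := by rw [h1]; simp only [map_add, map_mul, hσ2]; ring
  have s2 : σ t2 = c1*σ c0+c3*σ c2 := by rw [h2]; simp only [map_add, map_mul, hσ2]; ring
  have s3 : σ t3 = c0*σ c2+c1*σ c3 := by rw [h3]; simp only [map_add, map_mul, hσ2]; ring
  obtain ⟨e, hΔ, he⟩ := exE σ m hm hσ hcard t1 t2 k1 ht1 htr
  obtain ⟨b, hb⟩ : ∃ b, b = σ e := ⟨_, rfl⟩
  have sb : σ b = e := by rw [hb, hσ2]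
  rw [← hb] at hΔ he
  have he' : σ t2*(1+e*b) = t1*e := by
    have := congrArg σ he
    simp only [map_add, map_mul, map_one, k1, sb, ← hb] at this
    linear_combination this
  rw [NT_L σ hσ2 e b hb hΔ, gam1 t1 t2 (σ t2) t3 (σ t3) t4 e b hΔ ht1 he he',
    gam2 σ hσ2 t1 t2 (σ t2) t3 (σ t3) e b hΔ ht1 he he' k1 rfl hb]
  have A02 := tr02 c0 c1 c2 c3 (σ c3) (σ c2) (σ c1) (σ c0) e b
  have A23 := tr23 c0 c1 c2 c3 (σ c3) (σ c2) (σ c1) (σ c0) e b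
  have A12 := tr12 c0 c1 c2 c3 (σ c3) (σ c2) (σ c1) (σ c0) e b
  have Ath := trth c0 c1 c2 c3 (σ c3) (σ c2) (σ c1) (σ c0) e b
  rw [← h1, ← h2, ← s2] at A02
  rw [← h1, ← h3, ← s3] at A23
  rw [← h1, ← h2, ← s2, ← h3, ← s3, ← h4] at A12
  rw [← h1] at Ath
  have z02 : t2 + t1*b+σ t2*b^2 = 0 := by
    apply (mul_eq_zero.1 ?_).resolve_left hΔ
    calc (1+e*b)*(t2+t1*b+σ t2*b^2) = t2*(1+e*b)+t1*b*(1+e*b)+σ t2*(1+e*b)*b^2 := by ring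
      _ = 0 := by rw [he, he']; clear * -; grind
  rw [z02, mul_zero] at A02
  have S0 : σ (c0+c1*b+c2*b^2+c3*b^3) = σ c3*e^3+σ c2*e^2+σ c1*e+σ c0 := by
    simp only [map_add, map_mul, map_pow, sb]; ring
  have S1 : σ (c0*e+c1+c2*b^2*e+c3*b^2) = σ c3*e^2+σ c2*e^2*b+σ c1+σ c0*b := by
    simp only [map_add, map_mul, map_pow, sb, ← hb]; ring
  have S2 : σ (c0*e^2+c1*e^2*b+c2+c3*b) = σ c3*e+σ c2+σ c1*b^2*e+σ c0*b^2 := by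
    simp only [map_add, map_mul, map_pow, sb, ← hb]; ring
  have S3 : σ (c0*e^3+c1*e^2+c2*e+c3) = σ c3+σ c2*b+σ c1*b^2+σ c0*b^3 := by
    simp only [map_add, map_mul, map_pow, ← hb]; ring
  rw [← S1, ← S3] at A02
  rw [← S0, ← S1] at A23
  rw [← S1, ← S2] at A12
  rw [← S0, ← S1, ← S2, ← S3] at Ath
  clear S0 S1 S2 S3 h1 h2 h3 h4 s2 s3
  generalize c0+c1*b+c2*b^2+c3*b^3 = C0 at *
  generalize c0*e+c1+c2*b^2*e+c3*b^2 = C1 at *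
  generalize c0*e^2+c1*e^2*b+c2+c3*b = C2 at *
  generalize c0*e^3+c1*e^2+c2*e+c3 = C3 at *
  have hth : C0*σ C0+C3*σ C3+(C1*σ C1+C2*σ C2) ≠ 0 := by
    rw [Ath]; exact mul_ne_zero (pow_ne_zero 3 hΔ) ht1
  constructor
  · intro hNT
    obtain ⟨r1, r2⟩ := lemA σ m hm hσ hcard C0 C1 C2 C3 hNT _ _ _ _ _ _ rfl rfl rfl rfl rfl rfl A02 hth
    rcases r2 with r2 | r2
    · left
      rw [A12] at r2
      exact (mul_eq_zero.1 r2).resolve_left hΔ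
    · right
      rw [A23] at r1
      exact ⟨r2.2, (mul_eq_zero.1 r1).resolve_left hΔ⟩
  · intro h
    refine back σ m hσ hσ2 C0 C1 C2 C3 _ _ _ _ _ _ rfl rfl rfl rfl rfl rfl A02 hth ?_
    rcases h with h | ⟨h, h'⟩
    · left; rw [A12, h, mul_zero]
    · right; refine ⟨?_, h⟩
      rw [A23, h', mul_zero]

theorem mainUU [Fintype F] (σ : F →+* F) (m : ℕ) (hm : 4 ≤ m) (hσ : ∀ x, σ x = x^2^m)
    (hcard : Fintype.card F = 2^(2*m)) (a1 a2 a3 t1 t2 t3 t4 : F) (ha1 : σ a1 = a1)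
    (h1 : t1 = 1+a1^2+a2*σ a2+a3*σ a3) (h2 : t2 = a1+σ a2*a3)
    (h3 : t3 = σ a2+a1*σ a3) (h4 : t4 = a1^2+a2*σ a2) :
    NT (UU σ a3 a2 a1 1) ↔ t1 ≠ 0 ∧ tr m (t2*σ t2/t1^2) = 0 ∧
      (t1^2*t4+t1*t2*σ t2+t2^2*t3+(σ t2)^2*σ t3 = 0 ∨
      (Even m ∧ t1^2*t3+t1*(σ t2)^2+t2^2*t3+(σ t2)^2*σ t3 = 0)) := by
  have hσ2 := sig_sig σ m hσ hcard
  have k1 : σ t1 = t1 := by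
    rw [h1]; simp only [map_add, map_mul, map_pow, map_one, hσ2, ha1]; ring
  have g1 : t1 = (a3*σ a3+1*σ 1)+(a2*σ a2+a1*σ a1) := by rw [h1, ha1, map_one]; ring
  have g2 : t2 = a3*σ a2+a1*σ 1 := by rw [h2, map_one]; ring
  have g3 : t3 = a1*σ a3+1*σ a2 := by rw [h3]; ring
  have g4 : t4 = a2*σ a2+a1*σ a1 := by rw [h4, ha1]; ring
  by_cases ht1 : t1 = 0
  · refine ⟨fun hNT => ?_, fun h => absurd ht1 h.1⟩
    exfalso
    by_cases ht2 : t2 = 0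
    · exact caseD σ m hm hσ hcard a1 a2 a3 ha1 hNT (h1 ▸ ht1) (h2 ▸ ht2)
    · exact caseC σ m hm hσ hcard a3 a2 a1 1 hNT t1 t2 g1 g2 ht1 ht2
  · rcases tr_01 σ m hσ (t2*σ t2/t1^2) (by
      simp only [map_div₀, map_mul, map_pow, hσ2, k1]; ring) with htr | htr
    · rw [caseA σ m hm hσ hcard a3 a2 a1 1 t1 t2 t3 t4 g1 g2 g3 g4 ht1 htr]
      exact ⟨fun h => ⟨ht1, htr, h⟩, fun h => h.2.2⟩
    · refine ⟨fun hNT => ?_, fun h => ?_⟩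
      · exact (caseB σ m hm hσ hcard a3 a2 a1 1 hNT t1 t2 g1 g2 ht1 htr).elim
      · rw [htr] at h
        exact absurd h.2.1 one_ne_zero

theorem apn_iff [Fintype F] (σ : F →+* F) (c0 c1 c2 c3 : F) (f : F → F)
    (hf : ∀ x, f x = UU σ c0 c1 c2 c3 x x) :
    (∀ a : F, a ≠ 0 → ∀ b : F, {x : F | f (x + a) + f x = b}.ncard ≤ 2) ↔ NT (UU σ c0 c1 c2 c3) := by
  have hD : ∀ x a, f (x+a) + f x = f a + (UU σ c0 c1 c2 c3 x a + UU σ c0 c1 c2 c3 a x) := by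
    intro x a
    rw [hf, hf, hf]
    simp only [UU, map_add, CharTwo.add_sq]
    linear_combination (c0*x^3+c1*x^2*σ x+c2*(σ x)^2*x+c3*(σ x)^3)*(CharTwo.two_eq_zero (R := F))
  constructor
  · intro h a ha x hx
    by_contra hcon
    rw [not_or] at hcon
    have h1 := h a ha (f a)
    have h2 : ({0, a, x} : Set F).ncard ≤ {x : F | f (x + a) + f x = f a}.ncard := by
      apply Set.ncard_le_ncard _ (Set.toFinite _)
      intro z hz
      simp only [Set.mem_insert_iff, Set.mem_singleton_iff] at hz
      change f (z+a) + f z = f a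
      rcases hz with rfl | rfl | rfl
      · rw [hD]; simp [UU]
      · rw [hD, CharTwo.add_self_eq_zero, add_zero]
      · rw [hD, hx, add_zero]
    have h3 : ({0, a, x} : Set F).ncard = 3 :=
      Set.ncard_eq_three.2 ⟨0, a, x, ha.symm, fun h => hcon.1 h.symm, fun h => hcon.2 h.symm, rfl⟩
    omega
  · intro h a ha b
    by_cases hne : ∃ x0, f (x0+a) + f x0 = b
    · obtain ⟨x0, hx0⟩ := hne
      calc _ ≤ ({x0, x0+a} : Set F).ncard := by
            apply Set.ncard_le_ncard _ (Set.toFinite _)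
            intro x hx
            change f (x+a) + f x = b at hx
            rw [← hx0, hD, hD] at hx
            have hx' := add_left_cancel hx
            have := h a ha (x+x0) (by
              have e : UU σ c0 c1 c2 c3 (x+x0) a + UU σ c0 c1 c2 c3 a (x+x0) =
                (UU σ c0 c1 c2 c3 x a + UU σ c0 c1 c2 c3 a x) + (UU σ c0 c1 c2 c3 x0 a + UU σ c0 c1 c2 c3 a x0) := by
                simp only [UU, map_add, CharTwo.add_sq]; ring
              rw [e, hx', CharTwo.add_self_eq_zero])
            simp only [Set.mem_insert_iff, Set.mem_singleton_iff]
            rcases this with h | h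
            · left; exact CharTwo.add_eq_zero.1 h
            · right; rw [← h]
              linear_combination (-x0)*(CharTwo.two_eq_zero (R := F))
        _ ≤ 2 := by
          have := Set.ncard_insert_le x0 ({x0+a} : Set F)
          rw [Set.ncard_singleton] at this
          exact this
    · push Not at hne
      have : {x : F | f (x + a) + f x = b} = ∅ := by
        ext x; simpa using hne x
      rw [this]; simp
end le
end Kim

/-- Characterization of Kim-type APN functions (Li–Li–Helleseth–Qu).
Here `q = 2^m`, conjugation `z̄ = z^q`, `Tr_m` is realized as `x ↦ ∑ i < m, x^(2^i)`,
and membership of `a₁` in `𝔽_q` is expressed as `a₁ ^ (2^m) = a₁`. -/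
theorem kim_type_APN_characterization
    (m : ℕ) (hm : 4 ≤ m) (F : Type*) [Field F] [Fintype F]
    (hcard : Fintype.card F = 2 ^ (2 * m))
    (a₁ a₂ a₃ : F) (ha₁ : a₁ ^ (2 ^ m) = a₁)
    (f : F → F)
    (hf : ∀ x : F, f x = x ^ (3 * 2 ^ m) + a₁ * x ^ (2 * 2 ^ m + 1)
        + a₂ * x ^ (2 ^ m + 2) + a₃ * x ^ 3)
    (θ₁ θ₂ θ₃ θ₄ : F)
    (hθ₁ : θ₁ = 1 + a₁ ^ 2 + a₂ * a₂ ^ (2 ^ m) + a₃ * a₃ ^ (2 ^ m))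
    (hθ₂ : θ₂ = a₁ + a₂ ^ (2 ^ m) * a₃)
    (hθ₃ : θ₃ = a₂ ^ (2 ^ m) + a₁ * a₃ ^ (2 ^ m))
    (hθ₄ : θ₄ = a₁ ^ 2 + a₂ * a₂ ^ (2 ^ m)) :
    IsAPN f ↔
      ((Even m ∧
          ((θ₁ ≠ 0 ∧ (∑ i ∈ Finset.range m, (θ₂ * θ₂ ^ (2 ^ m) / θ₁ ^ 2) ^ 2 ^ i) = 0 ∧
              θ₁ ^ 2 * θ₄ + θ₁ * θ₂ * θ₂ ^ (2 ^ m) + θ₂ ^ 2 * θ₃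
                + (θ₂ ^ (2 ^ m)) ^ 2 * θ₃ ^ (2 ^ m) = 0) ∨
           (θ₁ ≠ 0 ∧ (∑ i ∈ Finset.range m, (θ₂ * θ₂ ^ (2 ^ m) / θ₁ ^ 2) ^ 2 ^ i) = 0 ∧
              θ₁ ^ 2 * θ₃ + θ₁ * (θ₂ ^ (2 ^ m)) ^ 2 + θ₂ ^ 2 * θ₃
                + (θ₂ ^ (2 ^ m)) ^ 2 * θ₃ ^ (2 ^ m) = 0))) ∨
       (Odd m ∧
          (θ₁ ≠ 0 ∧ (∑ i ∈ Finset.range m, (θ₂ * θ₂ ^ (2 ^ m) / θ₁ ^ 2) ^ 2 ^ i) = 0 ∧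
              θ₁ ^ 2 * θ₄ + θ₁ * θ₂ * θ₂ ^ (2 ^ m) + θ₂ ^ 2 * θ₃
                + (θ₂ ^ (2 ^ m)) ^ 2 * θ₃ ^ (2 ^ m) = 0))) := by
  have hch : CharP F 2 := by
    obtain ⟨p, hp⟩ := CharP.exists F
    have hpp : p.Prime := CharP.char_is_prime F p
    obtain ⟨n, _, hn⟩ := FiniteField.card F p
    rw [hn] at hcard
    have hd : p ∣ 2^(2*m) := by rw [← hcard]; exact dvd_pow_self p n.ne_zero
    have h2 : p = 2 := (Nat.prime_dvd_prime_iff_eq hpp Nat.prime_two).1 (hpp.dvd_of_dvd_pow hd)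
    rw [← h2]; exact hp
  obtain ⟨σ, hσ⟩ : ∃ σ : F →+* F, ∀ x, σ x = x^2^m :=
    ⟨iterateFrobenius F 2 m, fun x => iterateFrobenius_def 2 m x⟩
  simp only [← hσ] at ha₁ hθ₁ hθ₂ hθ₃ hθ₄
  have hff : ∀ x, f x = Kim.UU σ a₃ a₂ a₁ 1 x x := by
    intro x
    rw [hf, Kim.UU, hσ]
    ring
  have key := (Kim.apn_iff σ a₃ a₂ a₁ 1 f hff).trans
    (Kim.mainUU σ m hm hσ hcard a₁ a₂ a₃ θ₁ θ₂ θ₃ θ₄ ha₁ hθ₁ hθ₂ hθ₃ hθ₄)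
  unfold Kim.tr at key
  have e : ∀ x : F, x^2^m = σ x := fun x => (hσ x).symm
  rw [e θ₂, e θ₃]
  refine Iff.trans key ?_
  rcases Nat.even_or_odd m with h | h
  · have : ¬ Odd m := Nat.not_odd_iff_even.2 h
    tauto
  · have : ¬ Even m := Nat.not_even_iff_odd.2 h
    tauto
end

section
/- Let m ≥ 4 and q = 2^m. Let f : F_{q²} → F_{q²} be given by f(x) = x^{3q} + a₁x^{2q+1} + a₃x³ where a₁, a₃ ∈ F_{q²} and a₁ = 0 or a₃ = 0. If f is APN, then f is affine equivalent to G₁(x) = x³. -/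
theorem kt_three {F : Type*} [Field F] [Finite F] (f : F → F) (h : IsAPN f) (a b x y z : F)
    (ha : a ≠ 0) (hxy : x ≠ y) (hxz : x ≠ z) (hyz : y ≠ z)
    (hx : f (x + a) + f x = b) (hy : f (y + a) + f y = b) (hz : f (z + a) + f z = b) : False := by
  have h1 := h a ha b
  have h2 : ({x, y, z} : Set F) ⊆ {x : F | f (x + a) + f x = b} := by
    rintro t (rfl | rfl | rfl) <;> assumption
  have h3 := Set.ncard_le_ncard h2 (Set.toFinite _)
  have h4 : ({x, y, z} : Set F).ncard = 3 := Set.ncard_eq_three.2 ⟨x, y, z, hxy, hxz, hyz, rfl⟩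
  omega

theorem kt_case1 (m : ℕ) (hm : 4 ≤ m) (F : Type*) [Field F] [Fintype F] [CharP F 2]
    (hcard : Fintype.card F = 2 ^ (2 * m)) (a : F) (f : F → F)
    (hf : ∀ x : F, f x = x ^ (3 * 2 ^ m) + a * x ^ 3) (hAPN : IsAPN f) :
    AffEquiv f (fun x : F => x ^ 3) := by
  classical
  have : Fact (Nat.Prime 2) := ⟨Nat.prime_two⟩
  set q := 2 ^ m with hq
  have hq16 : 16 ≤ q := by
    calc 16 = 2 ^ 4 := by norm_num
      _ ≤ 2 ^ m := Nat.pow_le_pow_right (by norm_num) hm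
  have hcq : Fintype.card F = q * q := by rw [hcard, hq, two_mul, pow_add]
  have hfrob : ∀ x : F, (x ^ q) ^ q = x := by
    intro x; rw [← pow_mul, ← hcq]; exact FiniteField.pow_card x
  have hadd : ∀ x y : F, (x + y) ^ q = x ^ q + y ^ q := fun x y => add_pow_char_pow x y 2 m
  have hff : ∀ x, f x = (x ^ 3) ^ q + a * x ^ 3 := by intro x; rw [hf, pow_mul]
  let L : F →+ F := AddMonoidHom.mk' (fun y => y ^ q + a * y) (by intro x y; simp only [hadd]; ring)
  have hL : ∀ y, L y = y ^ q + a * y := fun y => rfl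
  by_cases hinj : Function.Injective L
  · have hbij : Function.Bijective L := Finite.injective_iff_bijective.1 hinj
    let e : F ≃+ F := AddEquiv.ofBijective L hbij
    refine ⟨e.symm, id, ⟨e.symm.bijective, ?_⟩, ⟨Function.bijective_id, ?_⟩, ?_⟩
    · intro x y; simp
    · intro x y; simp
    · intro x
      have : f x = e (x ^ 3) := by rw [hff]; rfl
      simp [this]
  · exfalso
    rw [injective_iff_map_eq_zero] at hinj
    push Not at hinj
    obtain ⟨k, hk, hk0⟩ := hinj
    rw [hL] at hk
    have hkq : k ^ q = a * k := CharTwo.add_eq_zero.1 hk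
    have hN : a ^ q * a = 1 := by
      have h1 := hfrob k
      rw [hkq, mul_pow, hkq, ← mul_assoc] at h1
      exact mul_right_cancel₀ hk0 (by rw [h1, one_mul])
    let p : Polynomial F := Polynomial.X ^ q + Polynomial.C (a ^ q) * Polynomial.X
    have hpd : p.natDegree ≤ q := by
      refine Polynomial.natDegree_add_le_of_degree_le (by simp) ?_
      refine (Polynomial.natDegree_C_mul_le _ _).trans ?_
      simp; omega
    have hp0 : p ≠ 0 := by
      intro h
      have := congrArg (fun r => Polynomial.coeff r q) h
      have h1 : ¬ (1 = q) := by omega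
      simp only [p, Polynomial.coeff_add, Polynomial.coeff_X_pow, Polynomial.coeff_C_mul, Polynomial.coeff_X, if_neg h1] at this
      simp at this
    have hmem : ∀ x ∈ (Finset.univ : Finset F), f (x + 1) + f x ∈ p.roots.toFinset := by
      intro x _
      rw [Multiset.mem_toFinset, Polynomial.mem_roots hp0]
      have : f (x + 1) + f x = L ((x + 1) ^ 3 + x ^ 3) := by
        rw [map_add, hL, hL, hff, hff]
      rw [this]
      generalize (x + 1) ^ 3 + x ^ 3 = w
      simp only [Polynomial.IsRoot, p, Polynomial.eval_add, Polynomial.eval_mul, Polynomial.eval_pow,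
        Polynomial.eval_X, Polynomial.eval_C, hL]
      rw [hadd, hfrob, mul_pow, mul_add, ← mul_assoc (a ^ q) a, hN, one_mul]
      have := CharTwo.add_self_eq_zero (w + a ^ q * w ^ q)
      linear_combination this
    have hcr : p.roots.toFinset.card ≤ q :=
      (Multiset.toFinset_card_le _).trans ((Polynomial.card_roots' p).trans hpd)
    obtain ⟨b, hb, hb2⟩ := Finset.exists_lt_card_fiber_of_mul_lt_card_of_maps_to (n := 2) hmem (by
      rw [Finset.card_univ, hcq]; nlinarith)
    have := hAPN 1 one_ne_zero b
    rw [Set.ncard_eq_toFinset_card'] at this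
    simp only [Set.toFinset_ofPred] at this
    omega

theorem kt_case2 (m : ℕ) (hm : 4 ≤ m) (F : Type*) [Field F] [Fintype F] [CharP F 2]
    (hcard : Fintype.card F = 2 ^ (2 * m)) (a : F) (ha : a ≠ 0) (f : F → F)
    (hf : ∀ x : F, f x = x ^ (3 * 2 ^ m) + a * x ^ (2 * 2 ^ m + 1)) (hAPN : IsAPN f) :
    False := by
  classical
  have : Fact (Nat.Prime 2) := ⟨Nat.prime_two⟩
  have hqeven : ((2 ^ m : ℕ) : F) = 0 := by
    rw [Nat.cast_pow, Nat.cast_ofNat, CharTwo.two_eq_zero]; exact zero_pow (by omega)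
  set q := 2 ^ m with hq
  have hq16 : 16 ≤ q := by
    calc 16 = 2 ^ 4 := by norm_num
      _ ≤ 2 ^ m := Nat.pow_le_pow_right (by norm_num) hm
  have hcq : Fintype.card F = q * q := by rw [hcard, hq, two_mul, pow_add]
  obtain ⟨r, hr⟩ : ∃ r, q = r + 1 := ⟨q - 1, by omega⟩
  have hcq1 : Fintype.card F - 1 = r * (r + 2) := by
    rw [hcq, hr]; have : (r + 1) * (r + 1) = r * (r + 2) + 1 := by ring
    omega
  have hfrob : ∀ x : F, (x ^ q) ^ q = x := by
    intro x; rw [← pow_mul, ← hcq]; exact FiniteField.pow_card x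
  have hadd : ∀ x y : F, (x + y) ^ q = x ^ q + y ^ q := fun x y => add_pow_char_pow x y 2 m
  have hff : ∀ x, f x = (x ^ q) ^ 2 * (x ^ q + a * x) := by
    intro x; rw [hf]; ring
  have hf0 : f 0 = 0 := by rw [hff]; simp [show q ≠ 0 by omega]
  let g : Fˣ → F := fun x => ((x : F) ^ q + a * x) / ((x : F) ^ q) ^ 2
  have hg : ∀ x : Fˣ, g x = ((x : F) ^ q + a * x) / ((x : F) ^ q) ^ 2 := fun _ => rfl
  have hinj : Function.Injective g := by
    intro x y hxy
    by_contra hne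
    have hne' : (x : F) ≠ y := fun h => hne (Units.ext h)
    rw [hg, hg, div_eq_div_iff (by simp) (by simp)] at hxy
    refine kt_three f hAPN x (f x) 0 x y x.ne_zero x.ne_zero.symm y.ne_zero.symm hne' ?_ ?_ ?_
    · simp [hf0]
    · rw [CharTwo.add_self_eq_zero, hf0, zero_add]
    · rw [hff, hff, hff, hadd]
      have h2 : (2 : F) = 0 := CharTwo.two_eq_zero
      generalize (x : F) ^ q = X at *
      generalize (y : F) ^ q = Y at *
      linear_combination hxy + (Y ^ 2 * (Y + a * y) + X * Y * (Y + X + a * (y + x)) + X^2 * (Y + a * y)) * h2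
  obtain ⟨c, hc1, hcq'⟩ : ∃ c : Fˣ, c ≠ 1 ∧ (c : F) ^ q = c := by
    have h1 : ¬ (∀ x : Fˣ, x ^ (r + 2) = 1) := by
      rw [FiniteField.forall_pow_eq_one_iff, hcq1]
      intro h
      have := Nat.le_of_dvd (by omega) h
      nlinarith
    push Not at h1
    obtain ⟨u, hu⟩ := h1
    refine ⟨u ^ (r + 2), hu, ?_⟩
    have h2 : (u : F) ^ (r * (r + 2)) = 1 := by
      rw [← hcq1]; exact FiniteField.pow_card_sub_one_eq_one _ u.ne_zero
    rw [Units.val_pow_eq_pow_val, ← pow_mul, hr, show (r + 2) * (r + 1) = r * (r + 2) + (r + 2) by ring,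
      pow_add, h2, one_mul]
  have hg0 : ∀ x, g x ≠ 0 := by
    intro x hx
    have h1 : (x : F) ^ q + a * x = 0 := by
      rw [hg, div_eq_zero_iff] at hx
      rcases hx with h | h
      · exact h
      · simp at h
    have h2 : g (c * x) = g x := by
      rw [hx, hg, Units.val_mul, mul_pow, hcq',
        show (c : F) * (x : F) ^ q + a * (c * x) = c * ((x : F) ^ q + a * x) by ring, h1]
      simp
    have h3 := hinj h2
    exact hc1 (by simpa using h3)
  let σ : Fˣ → Fˣ := fun x => Units.mk0 (g x) (hg0 x)
  have hσ : Function.Bijective σ := by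
    apply Finite.injective_iff_bijective.1
    intro x y h
    exact hinj (by simpa [σ] using congrArg Units.val h)
  have hS0 : ∑ x : Fˣ, (g x) ^ r = 0 := by
    have h1 : ∑ x : Fˣ, ((σ x : Fˣ) : F) ^ r = ∑ x : Fˣ, (x : F) ^ r :=
      Function.Bijective.sum_comp hσ (fun x : Fˣ => (x : F) ^ r)
    have h2 := FiniteField.sum_pow_units F r
    rw [hcq1, if_neg] at h2
    · simpa [σ] using h1.trans (by simpa using h2)
    · intro h
      have := Nat.le_of_dvd (by omega) h
      nlinarith
  have hgr : ∀ x : Fˣ, (g x) ^ r =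
      ∑ j ∈ Finset.range (r + 1), (a ^ j * (r.choose j : F)) * (x : F) ^ (r * (r + 3 - j)) := by
    intro x
    have hx1 : (x : F) ^ (r * (r + 2)) = 1 := by
      rw [← hcq1]; exact FiniteField.pow_card_sub_one_eq_one _ x.ne_zero
    have h1 : (g x) ^ r = (a * x + (x : F) ^ q) ^ r * (x : F) ^ (2 * r) := by
      rw [hg, div_pow, div_eq_iff (by simp), mul_assoc, add_comm (a * (x : F))]
      have : (x : F) ^ (2 * r) * (((x : F) ^ q) ^ 2) ^ r = ((x : F) ^ (r * (r + 2))) ^ 2 := by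
        rw [hr]; ring
      rw [this, hx1]; simp
    rw [h1, add_pow, Finset.sum_mul]
    refine Finset.sum_congr rfl fun j hj => ?_
    have hj' : j ≤ r := by simpa [Nat.lt_succ_iff] using hj
    obtain ⟨i, rfl⟩ := Nat.exists_eq_add_of_le hj'
    rw [hr, show j + i - j = i by omega, show j + i + 3 - j = i + 3 by omega]
    ring
  have hS1 : ∑ x : Fˣ, (g x) ^ r = - (a * (r : F)) := by
    simp_rw [hgr]
    rw [Finset.sum_comm, Finset.sum_eq_single 1]
    · rw [← Finset.mul_sum]
      have h2 := FiniteField.sum_pow_units F (r * (r + 3 - 1))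
      rw [hcq1, if_pos (by simp)] at h2
      have h3 : ∑ x : Fˣ, (x : F) ^ (r * (r + 3 - 1)) = -1 := by simpa using h2
      rw [h3]; simp
    · intro j hj hj1
      rw [← Finset.mul_sum]
      have h2 := FiniteField.sum_pow_units F (r * (r + 3 - j))
      rw [hcq1, if_neg] at h2
      · have h3 : ∑ x : Fˣ, (x : F) ^ (r * (r + 3 - j)) = 0 := by simpa using h2
        rw [h3, mul_zero]
      · intro h
        have h4 := Nat.dvd_of_mul_dvd_mul_left (by omega) h
        have hj' : j ≤ r := by simpa [Nat.lt_succ_iff] using hj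
        obtain ⟨t, ht⟩ := h4
        have : t = 1 := by
          rcases t with _ | _ | t
          · omega
          · rfl
          · exfalso
            have : (r + 2) * (t + 1 + 1) = (r + 2) * t + 2 * (r + 2) := by ring
            have := Nat.zero_le ((r + 2) * t)
            omega
        subst this
        omega
    · intro h; simp at h; omega
  rw [hS0] at hS1
  have hr1 : (r : F) = -1 := by
    rw [hr] at hqeven; push_cast at hqeven; linear_combination hqeven
  rw [hr1] at hS1
  apply ha
  linear_combination -hS1

theorem kim_type_vanishing_coeff_equiv_cube
    (m : ℕ) (hm : 4 ≤ m) (F : Type*) [Field F] [Fintype F]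
    (hcard : Fintype.card F = 2 ^ (2 * m))
    (a₁ a₃ : F) (ha : a₁ = 0 ∨ a₃ = 0)
    (f : F → F)
    (hf : ∀ x : F, f x = x ^ (3 * 2 ^ m) + a₁ * x ^ (2 * 2 ^ m + 1) + a₃ * x ^ 3)
    (hAPN : IsAPN f) :
    AffEquiv f (fun x : F => x ^ 3) := by
  have : Fact (Nat.Prime 2) := ⟨Nat.prime_two⟩
  have : CharP F 2 := charP_of_card_eq_prime_pow hcard
  by_cases h1 : a₁ = 0
  · exact kt_case1 m hm F hcard a₃ f (fun x => by rw [hf, h1]; ring) hAPN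
  · have h3 : a₃ = 0 := ha.resolve_left h1
    exact (kt_case2 m hm F hcard a₁ h1 f (fun x => by rw [hf, h3]; ring) hAPN).elim
end

section
/- Let m ≥ 4 and q = 2^m. Let f : F_{q²} → F_{q²} be given by f(x) = x^{3q} + a₁x^{2q+1} + a₃x³ where a₁ ∈ F_q and a₃ ∈ F_{q²}. If (a₁, 0, a₃) ∈ Γ₂, then f is affine equivalent to G₁(x) = x³ or f is affine equivalent to G₂(x) = x^{2^{m-1}+1}. -/
theorem aux_conj_perm {F : Type*} [Field F] [Fintype F] [CharP F 2] (m : ℕ)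
    (hcard : Fintype.card F = 2 ^ (2 * m)) (α β : F)
    (h : α * α ^ (2 ^ m) + β * β ^ (2 ^ m) ≠ 0) :
    IsAffinePerm (fun y : F => α * y + β * y ^ (2 ^ m)) := by
  have h2 : (2 : F) = 0 := CharTwo.two_eq_zero
  have hadd : ∀ x y : F, (x + y) ^ (2 ^ m) = x ^ (2 ^ m) + y ^ (2 ^ m) :=
    fun x y => add_pow_char_pow x y 2 m
  have hinv : ∀ x : F, (x ^ (2 ^ m)) ^ (2 ^ m) = x := by
    intro x
    rw [← pow_mul, ← pow_add, ← two_mul, ← hcard]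
    exact FiniteField.pow_card x
  have h0 : (0 : F) ^ (2 ^ m) = 0 := zero_pow (by positivity)
  refine ⟨Finite.injective_iff_bijective.mp ?_, ?_⟩
  · have key : ∀ y : F, α ^ (2 ^ m) * (α * y + β * y ^ (2 ^ m))
        + β * (α * y + β * y ^ (2 ^ m)) ^ (2 ^ m) = (α * α ^ (2 ^ m) + β * β ^ (2 ^ m)) * y := by
      intro y
      rw [hadd, mul_pow, mul_pow, hinv]
      linear_combination (α ^ (2 ^ m) * β * y ^ (2 ^ m)) * h2
    intro x y hxy
    have hxy' : α * x + β * x ^ (2 ^ m) = α * y + β * y ^ (2 ^ m) := hxy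
    have h1 := key x
    rw [hxy', key y] at h1
    exact (mul_left_cancel₀ h h1).symm
  · intro x y
    simp only [hadd, h0]
    ring

theorem aux_AS {F : Type*} [Field F] [Fintype F] [CharP F 2] (m : ℕ)
    (hcard : Fintype.card F = 2 ^ (2 * m)) (t : F)
    (h : (∑ i ∈ Finset.range m, t ^ 2 ^ i) = 0) :
    ∃ s : F, s ^ 2 + s = t ∧ s ^ (2 ^ m) = s := by
  let K := AlgebraicClosure F
  have : CharP K 2 := charP_of_injective_algebraMap (algebraMap F K).injective 2
  have tel : ∀ (s : K) (n : ℕ), (∑ i ∈ Finset.range n, (s ^ 2 + s) ^ 2 ^ i) = s ^ 2 ^ n + s := by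
    intro s n
    induction n with
    | zero => simp [CharTwo.add_self_eq_zero]
    | succ n ih =>
      rw [Finset.sum_range_succ, ih, add_pow_char_pow, ← pow_mul, ← pow_succ']
      have h2 : (2 : K) = 0 := CharTwo.two_eq_zero
      linear_combination (s ^ 2 ^ n) * h2
  obtain ⟨s, hs⟩ : ∃ s : K, s ^ 2 + s = algebraMap F K t := by
    have hd : (Polynomial.X ^ 2 + Polynomial.X + Polynomial.C (algebraMap F K t) :
        Polynomial K).degree = 2 := by compute_degree!
    obtain ⟨s, hs⟩ := IsAlgClosed.exists_root _ (by rw [hd]; decide)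
    refine ⟨s, ?_⟩
    simp [Polynomial.IsRoot] at hs
    exact CharTwo.add_eq_zero.mp hs
  have hsq : s ^ 2 ^ m = s := by
    have h1 := tel s m
    rw [hs] at h1
    have h3 := congrArg (algebraMap F K) h
    rw [map_sum, map_zero] at h3
    simp only [map_pow] at h3
    rw [h3] at h1
    exact CharTwo.add_eq_zero.mp h1.symm
  have hsq2 : s ^ Fintype.card F = s := by
    rw [hcard, two_mul, pow_add, pow_mul, hsq, hsq]
  obtain ⟨r, hr⟩ : ∃ r : F, algebraMap F K r = s := by
    have hp : (Polynomial.X ^ Fintype.card F - Polynomial.X : Polynomial F) =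
        ∏ a : F, (Polynomial.X - Polynomial.C a) := by
      have h1 : (Polynomial.X ^ Fintype.card F - Polynomial.X : Polynomial F).Monic :=
        Polynomial.monic_X_pow_sub (by
          rw [Polynomial.degree_X]; exact_mod_cast Fintype.one_lt_card)
      have h3 := Polynomial.prod_multiset_X_sub_C_of_monic_of_roots_card_eq h1 (by
        rw [FiniteField.roots_X_pow_card_sub_X,
          FiniteField.X_pow_card_sub_X_natDegree_eq F Fintype.one_lt_card]
        rfl)
      rw [FiniteField.roots_X_pow_card_sub_X] at h3
      exact h3.symm
    have := congrArg (Polynomial.aeval s) hp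
    rw [map_prod] at this
    simp only [map_sub, map_pow, Polynomial.aeval_X, Polynomial.aeval_C, hsq2, sub_self] at this
    obtain ⟨r, -, hr⟩ := Finset.prod_eq_zero_iff.mp this.symm
    exact ⟨r, (sub_eq_zero.mp hr).symm⟩
  refine ⟨r, ?_, ?_⟩ <;> apply (algebraMap F K).injective
  · simp [hr, hs]
  · simp [hr, hsq]

/-- If `(a₁, 0, a₃) ∈ Γ₂`, then `f(x) = x^{3q} + a₁x^{2q+1} + a₃x³` is affine equivalent to
`G₁(x) = x³` or to `G₂(x) = x^{2^{m-1}+1}`. Here `q = 2^m`, `m ≥ 4`, `z̄ = z^q`,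
`Tr_m` is realized as `x ↦ ∑ i < m, x^(2^i)`, and `a₁ ∈ 𝔽_q` is expressed as `a₁^(2^m) = a₁`. -/
theorem kim_type_Gamma2_equiv_Gold
    (m : ℕ) (hm : 4 ≤ m) (F : Type*) [Field F] [Fintype F]
    (hcard : Fintype.card F = 2 ^ (2 * m))
    (a₁ a₂ a₃ : F) (ha₁ : a₁ ^ (2 ^ m) = a₁) (ha₂ : a₂ = 0)
    (f : F → F)
    (hf : ∀ x : F, f x = x ^ (3 * 2 ^ m) + a₁ * x ^ (2 * 2 ^ m + 1) + a₃ * x ^ 3)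
    (θ₁ θ₂ θ₃ : F)
    (hθ₁ : θ₁ = 1 + a₁ ^ 2 + a₂ * a₂ ^ (2 ^ m) + a₃ * a₃ ^ (2 ^ m))
    (hθ₂ : θ₂ = a₁ + a₂ ^ (2 ^ m) * a₃)
    (hθ₃ : θ₃ = a₂ ^ (2 ^ m) + a₁ * a₃ ^ (2 ^ m))
    (hΓ₂ : θ₁ ≠ 0 ∧ (∑ i ∈ Finset.range m, (θ₂ * θ₂ ^ (2 ^ m) / θ₁ ^ 2) ^ 2 ^ i) = 0 ∧
        θ₁ ^ 2 * θ₃ + θ₁ * (θ₂ ^ (2 ^ m)) ^ 2 + θ₂ ^ 2 * θ₃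
          + (θ₂ ^ (2 ^ m)) ^ 2 * θ₃ ^ (2 ^ m) = 0) :
    AffEquiv f (fun x : F => x ^ 3) ∨ AffEquiv f (fun x : F => x ^ (2 ^ (m - 1) + 1)) := by
  subst ha₂
  have : Fact (Nat.Prime 2) := ⟨Nat.prime_two⟩
  have : CharP F 2 := by
    obtain ⟨p, hp⟩ := CharP.exists F
    have := hp
    obtain ⟨n, hpp, hn⟩ := FiniteField.card F p
    rw [hcard] at hn
    have : p ∣ 2 ^ (2 * m) := by rw [hn]; exact dvd_pow_self p n.ne_zero
    have h3 := (Nat.prime_dvd_prime_iff_eq hpp Nat.prime_two).mp (hpp.dvd_of_dvd_pow this)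
    rw [← h3]; exact hp
  have h2 : (2 : F) = 0 := CharTwo.two_eq_zero
  have hadd : ∀ x y : F, (x + y) ^ (2 ^ m) = x ^ (2 ^ m) + y ^ (2 ^ m) :=
    fun x y => add_pow_char_pow x y 2 m
  have hinv : ∀ x : F, (x ^ (2 ^ m)) ^ (2 ^ m) = x := by
    intro x
    rw [← pow_mul, ← pow_add, ← two_mul, ← hcard]
    exact FiniteField.pow_card x
  have h0 : (0 : F) ^ (2 ^ m) = 0 := zero_pow (by positivity)
  have hcomm : ∀ (x : F) (n : ℕ), (x ^ n) ^ (2 ^ m) = (x ^ (2 ^ m)) ^ n := by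
    intro x n; rw [← pow_mul, ← pow_mul, mul_comm]
  simp only [h0, mul_zero, zero_mul, add_zero, zero_add] at hθ₁ hθ₂ hθ₃
  subst hθ₂
  subst hθ₃
  obtain ⟨hne, htr, heq⟩ := hΓ₂
  have hf1 : ∀ x : F, f x = (x ^ (2 ^ m)) ^ 3 + θ₂ * (x ^ (2 ^ m)) ^ 2 * x + a₃ * x ^ 3 := by
    intro x; rw [hf]; ring
  have hf2 : ∀ x : F, (f x) ^ (2 ^ m) =
      x ^ 3 + θ₂ * x ^ 2 * x ^ (2 ^ m) + a₃ ^ (2 ^ m) * (x ^ (2 ^ m)) ^ 3 := by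
    intro x; rw [hf1]
    simp only [hadd, mul_pow, hcomm _ 3, hcomm _ 2, hinv, ha₁]
  have hθq : θ₁ ^ (2 ^ m) = θ₁ := by
    rw [hθ₁]
    simp only [hadd, mul_pow, hcomm _ 2, hinv, ha₁, one_pow]
    ring
  simp only [mul_pow, hinv, ha₁] at heq htr
  have hid : IsAffinePerm (fun x : F => x) := ⟨Function.bijective_id, fun x y => by simp⟩
  by_cases ha0 : θ₂ = 0
  · left
    refine ⟨_, _, aux_conj_perm m hcard (a₃ ^ (2 ^ m) / θ₁) (1 / θ₁) ?_, hid, ?_⟩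
    · rw [div_pow, div_pow, hθq, hinv, one_pow]
      have : a₃ ^ 2 ^ m / θ₁ * (a₃ / θ₁) + 1 / θ₁ * (1 / θ₁) = 1 / θ₁ := by
        field_simp
        rw [hθ₁, ha0]; ring
      rw [this]; exact one_div_ne_zero hne
    · intro x
      simp only [hf2]
      simp only [hf1, ha0]
      field_simp
      rw [hθ₁, ha0]
      linear_combination (-(a₃ ^ (2 ^ m) * (x ^ (2 ^ m)) ^ 3)) * h2
  have hta : a₃ ^ (2 ^ m) = a₃ := by
    have e1 : θ₁ ^ 2 * a₃ ^ (2 ^ m) + θ₁ * θ₂ + θ₂ ^ 2 * (a₃ + a₃ ^ (2 ^ m)) = 0 := by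
      apply mul_left_cancel₀ ha0
      linear_combination heq
    have e2 := congrArg (fun z : F => z ^ (2 ^ m)) e1
    simp only [hadd, mul_pow, hcomm _ 2, hinv, ha₁, hθq, h0] at e2
    apply mul_left_cancel₀ (pow_ne_zero 2 hne)
    linear_combination e1 - e2
  rw [hta] at heq hθ₁
  have hat : θ₂ = θ₁ * a₃ := by
    apply mul_left_cancel₀ hne
    apply mul_left_cancel₀ ha0
    linear_combination heq - (θ₁ ^ 2 * θ₂ * a₃ + θ₂ ^ 3 * a₃) * h2
  have ht0 : a₃ ≠ 0 := by
    rintro rfl; exact ha0 (by simpa using hat)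
  obtain ⟨s, hst, hsq⟩ : ∃ s : F, s ^ 2 + s = a₃ ∧ s ^ (2 ^ m) = s := by
    obtain ⟨s, h1, h3⟩ := aux_AS m hcard _ htr
    have h4 : θ₂ * θ₂ / θ₁ ^ 2 = a₃ ^ 2 := by
      rw [hat]; field_simp
    rw [h4] at h1
    refine ⟨a₃ + s, ?_, by rw [hadd, hta, h3]⟩
    linear_combination -h1 + (a₃ * s + s ^ 2 + s) * h2
  have hs1q : (s + 1) ^ (2 ^ m) = s + 1 := by rw [hadd, hsq, one_pow]
  have hM : IsAffinePerm (fun y : F => (s + 1) * y + s * y ^ (2 ^ m)) := by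
    apply aux_conj_perm m hcard
    rw [hs1q, hsq]
    have : (s + 1) * (s + 1) + s * s = 1 := by linear_combination (s ^ 2 + s) * h2
    rw [this]; exact one_ne_zero
  have hMq : ∀ x : F, ((s + 1) * x + s * x ^ (2 ^ m)) ^ (2 ^ m) =
      (s + 1) * x ^ (2 ^ m) + s * x := by
    intro x; rw [hadd, mul_pow, mul_pow, hs1q, hsq, hinv]
  have hcases : (θ₂ + a₃) * (θ₂ * a₃ + a₃ ^ 2 + 1) = 0 := by
    rw [hθ₁] at hat
    linear_combination (-1 : F) * hat + (θ₂ + a₃ ^ 2 * θ₂) * h2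
  rcases mul_eq_zero.mp hcases with hA | hB
  · left
    refine ⟨_, _, aux_conj_perm m hcard s (s + 1) ?_, hM, ?_⟩
    · rw [hs1q, hsq]
      have : s * s + (s + 1) * (s + 1) = 1 := by linear_combination (s ^ 2 + s) * h2
      rw [this]; exact one_ne_zero
    · intro x
      have hA' : θ₂ = s ^ 2 + s := by rw [hst]; exact CharTwo.add_eq_zero.mp hA
      simp only [hf2, hMq, hta]
      simp only [hf1, hMq]
      rw [← hst, hA']
      generalize x ^ (2 ^ m) = y
      clear * - h2
      grind
  · right
    have hs0 : s ≠ 0 := by rintro rfl; apply ht0; rw [← hst]; ring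
    have hr0 : s + 1 ≠ 0 := by
      intro h; apply ht0; rw [← hst]; linear_combination s * h
    have he : s ^ 2 + s + 1 ≠ 0 := by
      intro h
      rw [hst] at h
      apply ha0
      apply mul_left_cancel₀ ht0
      linear_combination hB - (a₃ - 1) * h - h2
    have he2 : s * (s + 1) + 1 ≠ 0 := by
      intro h; apply he; linear_combination h
    set c : F := (s ^ 2 + s) / (s ^ 2 + s + 1) ^ 2 with hc
    have hcq : c ^ (2 ^ m) = c := by
      simp only [hc, div_pow, hcomm _ 2, hadd, hsq, one_pow]
    have hL := aux_conj_perm m hcard (c * s ^ 3) (c * (s + 1) ^ 3) (by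
      rw [mul_pow, mul_pow, hcq, hcomm _ 3, hcomm _ 3, hs1q, hsq]
      have : c * s ^ 3 * (c * s ^ 3) + c * (s + 1) ^ 3 * (c * (s + 1) ^ 3)
          = (s ^ 2 + s) ^ 2 / (s ^ 2 + s + 1) ^ 2 := by
        rw [hc]; field_simp
        clear * - h2
        grind
      rw [this, hst]
      rw [hst] at he
      exact div_ne_zero (pow_ne_zero 2 ht0) (pow_ne_zero 2 he))
    refine ⟨fun y => (frobeniusEquiv F 2).symm (c * s ^ 3 * y + c * (s + 1) ^ 3 * y ^ (2 ^ m)),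
      _, ⟨(frobeniusEquiv F 2).symm.bijective.comp hL.1, ?_⟩, hM, ?_⟩
    · intro x y
      have := hL.2 x y
      simp only at this
      rw [← map_add, ← map_add, this]
    · intro x
      rw [RingEquiv.eq_symm_apply, frobeniusEquiv_apply, frobenius_def]
      have hx : (x ^ (2 ^ (m - 1) + 1)) ^ 2 = x ^ (2 ^ m) * x ^ 2 := by
        rw [← pow_mul, ← pow_add, add_mul, ← pow_succ, Nat.sub_add_cancel (by omega), one_mul]
      have hB' : θ₂ = (s ^ 2 + s + 1) ^ 2 / (s ^ 2 + s) := by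
        rw [hst, eq_div_iff ht0]
        linear_combination hB - (a₃ ^ 2 + a₃ + 1) * h2
      rw [hx]
      simp only [hf2, hMq, hta]
      simp only [hf1, hMq]
      have hss : s ^ 2 + s ≠ 0 := by rw [hst]; exact ht0
      rw [← hst, hB', hc]
      generalize x ^ (2 ^ m) = y
      field_simp
      clear * - h2
      grind
end
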